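/- Let Q be a hereditary graph class and W a graphon. Then W ∈ Q̂ if and only if p(F;W) = 0 for every m ≥ 1 and every simple graph F on vertex set {1,…,m} with F ∉ Q_m. -/

import Mathlib

open MeasureTheory Set Filter

noncomputable section

/-- A graphon: a symmetric measurable function `ℝ → ℝ → ℝ` with values in `[0,1]`
(only its values on `[0,1]²` matter). -/
def IsGraphon (W : ℝ → ℝ → ℝ) : Prop :=
  (∀ x y, W x y = W y x) ∧ Measurable (Function.uncurry W) ∧
    ∀ x y, W x y ∈ Set.Icc (0 : ℝ) 1

/-- The cut norm `‖U‖_□`, the supremum over measurable `S, T ⊆ [0,1]` of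
`|∫_{S×T} U|`. -/
def cutNorm (U : ℝ → ℝ → ℝ) : ℝ :=
  sSup { r : ℝ | ∃ S T : Set ℝ, MeasurableSet S ∧ MeasurableSet T ∧
    S ⊆ Set.Icc 0 1 ∧ T ⊆ Set.Icc 0 1 ∧
    r = |∫ p in S ×ˢ T, U p.1 p.2| }

/-- `d_□(W₁, W₂) = ‖W₁ - W₂‖_□`. -/
def dCut (W₁ W₂ : ℝ → ℝ → ℝ) : ℝ := cutNorm (fun x y => W₁ x y - W₂ x y)

/-- A Lebesgue-measure-preserving map `[0,1] → [0,1]`. -/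
def IsMPSelf (σ : ℝ → ℝ) : Prop :=
  MeasureTheory.MeasurePreserving σ
      (MeasureTheory.volume.restrict (Set.Icc (0:ℝ) 1))
      (MeasureTheory.volume.restrict (Set.Icc (0:ℝ) 1)) ∧
    Set.MapsTo σ (Set.Icc (0:ℝ) 1) (Set.Icc (0:ℝ) 1)

/-- The cut distance `δ_□(W₁, W₂)`. -/
def deltaCut (W₁ W₂ : ℝ → ℝ → ℝ) : ℝ :=
  sInf { r : ℝ | ∃ σ₁ σ₂ : ℝ → ℝ, IsMPSelf σ₁ ∧ IsMPSelf σ₂ ∧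
    r = cutNorm (fun x y => W₁ (σ₁ x) (σ₁ y) - W₂ (σ₂ x) (σ₂ y)) }

/-- The binary entropy function `h` (base-2 logarithm; `logb 2 0 = 0` by convention,
so `h 0 = h 1 = 0`). -/
def binEnt (x : ℝ) : ℝ := -x * Real.logb 2 x - (1 - x) * Real.logb 2 (1 - x)

/-- `h̃ x = h (min x (1/2))`. -/
def htilde (x : ℝ) : ℝ := binEnt (min x (1/2))

/-- The entropy `Ent(W) = ∫₀¹∫₀¹ h(W(x,y)) dx dy` of a graphon. -/
def graphonEnt (W : ℝ → ℝ → ℝ) : ℝ :=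
  ∫ x in Set.Icc (0:ℝ) 1, ∫ y in Set.Icc (0:ℝ) 1, binEnt (W x y)

open Classical in
/-- The graphon `W_G` of a simple graph `G` on `{1, …, n}` (vertices as `Fin n`,
vertex `i : Fin n` representing `i+1`): `W_G x y = 1` iff `⌈nx⌉⌈ny⌉ ∈ E(G)`. -/
def graphonOfGraph {n : ℕ} (G : SimpleGraph (Fin n)) : ℝ → ℝ → ℝ := fun x y =>
  if ∃ i j : Fin n, G.Adj i j ∧ ⌈(n : ℝ) * x⌉ = ((i : ℕ) : ℤ) + 1 ∧
      ⌈(n : ℝ) * y⌉ = ((j : ℕ) : ℤ) + 1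
  then 1 else 0

/-- A labelled graph class: a set of graphs on `{1,…,n}` for each `n`. -/
abbrev GraphClass := ∀ n : ℕ, Set (SimpleGraph (Fin n))

/-- A graph class is closed under relabelling by permutations. -/
def IsGraphClass (Q : GraphClass) : Prop :=
  ∀ (n : ℕ) (π : Equiv.Perm (Fin n)) (G : SimpleGraph (Fin n)),
    G ∈ Q n → G.comap ⇑π ∈ Q n

/-- A hereditary graph class: a graph class closed under taking induced subgraphs
(relabelled by the order-preserving bijection). -/
def IsHereditary (Q : GraphClass) : Prop :=
  IsGraphClass Q ∧
    ∀ (m n : ℕ) (f : Fin m → Fin n), StrictMono f →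
      ∀ G ∈ Q n, G.comap f ∈ Q m

/-- `Q̂`: the set of graphons which are limits (in cut distance) of sequences of graphs in
the class `Q` whose orders tend to infinity. -/
def limitSet (Q : GraphClass) : Set (ℝ → ℝ → ℝ) :=
  { W | IsGraphon W ∧
    ∃ (nk : ℕ → ℕ) (Gk : ∀ k, SimpleGraph (Fin (nk k))),
      (∀ k, Gk k ∈ Q (nk k)) ∧ Filter.Tendsto nk Filter.atTop Filter.atTop ∧
      Filter.Tendsto (fun k => deltaCut (graphonOfGraph (Gk k)) W) Filter.atTop (nhds 0) }

/-- `C(n,2) = n(n-1)/2` as a real number. -/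
def choose2 (n : ℕ) : ℝ := (n : ℝ) * ((n : ℝ) - 1) / 2

open Classical in
/-- The step function `E[W | P]` obtained by averaging `W` over the products of the
parts of the partition `P` of `[0,1]`. -/
def condExpPart {k : ℕ} (P : Fin k → Set ℝ) (W : ℝ → ℝ → ℝ) : ℝ → ℝ → ℝ := fun x y =>
  ∑ i : Fin k, ∑ j : Fin k,
    if x ∈ P i ∧ y ∈ P j then ⨍ p in (P i) ×ˢ (P j), W p.1 p.2 else 0

/-- `W̄_n`: the step function of `W` for the partition of `[0,1]` into `n` consecutive
intervals of length `1/n`. -/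
def barStep (n : ℕ) (W : ℝ → ℝ → ℝ) : ℝ → ℝ → ℝ :=
  condExpPart (fun i : Fin n => Set.Ioc (((i : ℕ) : ℝ)/n) ((((i : ℕ) : ℝ) + 1)/n)) W

/-- `N̂_□(n, δ; W)`: the number of graphs `G` on `{1,…,n}` with `d_□(W_G, W) ≤ δ`. -/
def NhatCut (n : ℕ) (δ : ℝ) (W : ℝ → ℝ → ℝ) : ℕ :=
  Nat.card {G : SimpleGraph (Fin n) // dCut (graphonOfGraph G) W ≤ δ}

/-- `N_□(n, δ; W)`: the number of graphs `G` on `{1,…,n}` with `δ_□(W_G, W) ≤ δ`. -/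
def NCut (n : ℕ) (δ : ℝ) (W : ℝ → ℝ → ℝ) : ℕ :=
  Nat.card {G : SimpleGraph (Fin n) // deltaCut (graphonOfGraph G) W ≤ δ}

open Classical in
/-- The induced density `p(F; W)` of a graph `F` on `{1,…,k}` in a graphon `W`. -/
def inducedDensity {k : ℕ} (F : SimpleGraph (Fin k)) (W : ℝ → ℝ → ℝ) : ℝ :=
  ∫ x : Fin k → ℝ in Set.univ.pi (fun _ : Fin k => Set.Icc (0:ℝ) 1),
    ∏ i : Fin k, ∏ j : Fin k,
      if i < j then (if F.Adj i j then W (x i) (x j) else 1 - W (x i) (x j)) else 1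

open Classical in
/-- The randomness support graphon `1_{rand(W)}` of `W`. -/
def randIndicator (W : ℝ → ℝ → ℝ) : ℝ → ℝ → ℝ := fun x y =>
  if 0 < W x y ∧ W x y < 1 then 1 else 0

/-- A kernel `U` is `K_r`-free if `∏_{i<j} U(x_i, x_j) = 0` for a.e. `x ∈ [0,1]^r`. -/
def KFree (r : ℕ) (U : ℝ → ℝ → ℝ) : Prop :=
  ∀ᵐ x ∂(MeasureTheory.volume.restrict (Set.univ.pi fun _ : Fin r => Set.Icc (0:ℝ) 1)),
    (∏ i : Fin r, ∏ j : Fin r, if i < j then U (x i) (x j) else 1) = 0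

open Classical in
/-- The graphon `W^{(r,s)}`: equal to `1/2` off the diagonal blocks, `1` on the first `s`
diagonal blocks `I_i × I_i`, and `0` on the remaining diagonal blocks. -/
def Wrs (r s : ℕ) : ℝ → ℝ → ℝ := fun x y =>
  if ∃ i j : Fin r, i ≠ j ∧ x ∈ Set.Ioc (((i:ℕ):ℝ)/r) ((((i:ℕ):ℝ)+1)/r) ∧
      y ∈ Set.Ioc (((j:ℕ):ℝ)/r) ((((j:ℕ):ℝ)+1)/r)
  then 1/2
  else if ∃ i : Fin r, (i:ℕ) < s ∧ x ∈ Set.Ioc (((i:ℕ):ℝ)/r) ((((i:ℕ):ℝ)+1)/r) ∧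
      y ∈ Set.Ioc (((i:ℕ):ℝ)/r) ((((i:ℕ):ℝ)+1)/r)
  then 1 else 0

/-- `E_r = ⋃_{i ≠ j} I_i × I_j` where `I_i`, `i = 1, …, r`, are the consecutive
intervals of length `1/r` in `[0,1]`. -/
def Er (r : ℕ) : Set (ℝ × ℝ) :=
  ⋃ (i : Fin r) (j : Fin r) (_ : i ≠ j),
    (Set.Ioc (((i:ℕ):ℝ)/r) ((((i:ℕ):ℝ)+1)/r)) ×ˢ (Set.Ioc (((j:ℕ):ℝ)/r) ((((j:ℕ):ℝ)+1)/r))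

/-- `R_r`: the set of graphons equal to `1/2` on `E_r` and `{0,1}`-valued elsewhere
on `[0,1]²`. -/
def Rset (r : ℕ) : Set (ℝ → ℝ → ℝ) :=
  { W | IsGraphon W ∧ (∀ p ∈ Er r, W p.1 p.2 = 1/2) ∧
      ∀ p ∈ ((Set.Icc (0:ℝ) 1) ×ˢ (Set.Icc (0:ℝ) 1)) \ Er r,
        W p.1 p.2 = 0 ∨ W p.1 p.2 = 1 }

/-- A graphon is random-free if it is `{0,1}`-valued a.e. on `[0,1]²`. -/
def IsRandomFree (W : ℝ → ℝ → ℝ) : Prop :=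
  ∀ᵐ p ∂(MeasureTheory.volume.restrict ((Set.Icc (0:ℝ) 1) ×ˢ (Set.Icc (0:ℝ) 1))),
    W (Prod.fst p) (Prod.snd p) = 0 ∨ W (Prod.fst p) (Prod.snd p) = 1


lemma exists_vertex {ι : Type*} [Fintype ι] [DecidableEq ι] (f : (ι → ℝ) → ℝ)
    (hf : ∀ g e, ∃ a b : ℝ, ∀ t, f (Function.update g e t) = a + b * t)
    (h : ι → ℝ) (hh : ∀ e, h e ∈ Set.Icc (0:ℝ) 1) :
    ∃ g : ι → ℝ, (∀ e, g e = 0 ∨ g e = 1) ∧ (∀ e, h e = 0 → g e = 0) ∧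
      (∀ e, h e = 1 → g e = 1) ∧ f g ≤ f h := by
  have key : ∀ D : Finset ι, ∃ g : ι → ℝ, (∀ e ∈ D, g e = 0 ∨ g e = 1) ∧
      (∀ e, h e = 0 → g e = 0) ∧ (∀ e, h e = 1 → g e = 1) ∧
      (∀ e, g e ∈ Set.Icc (0:ℝ) 1) ∧ f g ≤ f h := by
    intro D
    induction D using Finset.induction_on with
    | empty => exact ⟨h, by simp, fun _ h => h, fun _ h => h, hh, le_rfl⟩
    | insert e D _ ih =>
      obtain ⟨g, h1, h2, h3, h4, h5⟩ := ih
      by_cases he : g e = 0 ∨ g e = 1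
      · exact ⟨g, by
          intro e' he'
          rcases Finset.mem_insert.1 he' with rfl | h
          · exact he
          · exact h1 _ h, h2, h3, h4, h5⟩
      · push Not at he
        obtain ⟨a, b, hab⟩ := hf g e
        have hg : f g = a + b * g e := by
          rw [← hab, Function.update_eq_self]
        have main : ∀ t : ℝ, (t = 0 ∨ t = 1) → b * t ≤ b * g e → ∃ g : ι → ℝ,
            (∀ e' ∈ insert e D, g e' = 0 ∨ g e' = 1) ∧
            (∀ e, h e = 0 → g e = 0) ∧ (∀ e, h e = 1 → g e = 1) ∧
            (∀ e, g e ∈ Set.Icc (0:ℝ) 1) ∧ f g ≤ f h := by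
          intro t ht hb
          refine ⟨Function.update g e t, ?_, ?_, ?_, ?_, ?_⟩
          · intro e' he'
            by_cases hee : e' = e
            · subst hee; simpa using ht
            · rw [Function.update_of_ne hee]
              exact h1 _ (Finset.mem_of_mem_insert_of_ne he' hee)
          · intro e' he'
            by_cases hee : e' = e
            · subst hee; exact absurd (h2 _ he') he.1
            · rw [Function.update_of_ne hee]; exact h2 _ he'
          · intro e' he'
            by_cases hee : e' = e
            · subst hee; exact absurd (h3 _ he') he.2
            · rw [Function.update_of_ne hee]; exact h3 _ he'
          · intro e'
            by_cases hee : e' = e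
            · subst hee; rcases ht with rfl | rfl <;> simp
            · rw [Function.update_of_ne hee]; exact h4 _
          · rw [hab]; linarith
        obtain ⟨h40, h41⟩ := h4 e
        rcases le_total 0 b with hb | hb
        · exact main 0 (Or.inl rfl) (by nlinarith)
        · exact main 1 (Or.inr rfl) (by nlinarith)
  obtain ⟨g, h1, h2, h3, -, h5⟩ := key Finset.univ
  exact ⟨g, fun e => h1 e (Finset.mem_univ _), h2, h3, h5⟩

/-- difference matrix -/
def diffMat {n : ℕ} (h g : Sym2 (Fin n) → ℝ) (i j : Fin n) : ℝ :=
  if i = j then 0 else g s(i, j) - h s(i, j)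

def quadTerm {n : ℕ} (h g : Sym2 (Fin n) → ℝ) (i i' j j' : Fin n) : ℝ :=
  diffMat h g i j * diffMat h g i j' * (diffMat h g i' j * diffMat h g i' j')

def quadSum {n : ℕ} (h g : Sym2 (Fin n) → ℝ) : ℝ :=
  ∑ i, ∑ i', ∑ j, ∑ j', if i ≠ i' ∧ j ≠ j' then quadTerm h g i i' j j' else 0

lemma affine_sum {κ : Type*} (s : Finset κ) (F : κ → ℝ → ℝ)
    (hF : ∀ k ∈ s, ∃ a b : ℝ, ∀ t, F k t = a + b * t) :
    ∃ a b : ℝ, ∀ t, ∑ k ∈ s, F k t = a + b * t := by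
  choose! a b hab using hF
  refine ⟨∑ k ∈ s, a k, ∑ k ∈ s, b k, fun t => ?_⟩
  rw [Finset.sum_mul, ← Finset.sum_add_distrib]
  exact Finset.sum_congr rfl fun k hk => hab k hk t

lemma diffMat_update {n : ℕ} (h g : Sym2 (Fin n) → ℝ) (e : Sym2 (Fin n)) (t : ℝ)
    (i j : Fin n) (hij : i ≠ j) : diffMat h (Function.update g e t) i j =
      if s(i, j) = e then t - h e else diffMat h g i j := by
  unfold diffMat
  rw [if_neg hij, if_neg hij]
  split_ifs with h1
  · subst h1; simp
  · rw [Function.update_of_ne h1]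

lemma quadTerm_affine {n : ℕ} (h g : Sym2 (Fin n) → ℝ) (e : Sym2 (Fin n)) (i i' j j' : Fin n)
    (hi : i ≠ i') (hj : j ≠ j') :
    ∃ a b : ℝ, ∀ t, quadTerm h (Function.update g e t) i i' j j' = a + b * t := by
  by_cases h1 : i = j
  · exact ⟨0, 0, fun t => by simp [quadTerm, diffMat, h1]⟩
  by_cases h2 : i = j'
  · exact ⟨0, 0, fun t => by simp [quadTerm, diffMat, h2]⟩
  by_cases h3 : i' = j
  · exact ⟨0, 0, fun t => by simp [quadTerm, diffMat, h3]⟩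
  by_cases h4 : i' = j'
  · exact ⟨0, 0, fun t => by simp [quadTerm, diffMat, h4]⟩
  have n1 : s(i, j) ≠ s(i, j') := by simp; grind
  have n2 : s(i, j) ≠ s(i', j) := by simp; grind
  have n3 : s(i, j) ≠ s(i', j') := by simp; grind
  have n4 : s(i, j') ≠ s(i', j) := by simp; grind
  have n5 : s(i, j') ≠ s(i', j') := by simp; grind
  have n6 : s(i', j) ≠ s(i', j') := by simp; grind
  simp only [quadTerm, diffMat_update h g e _ _ _ h1, diffMat_update h g e _ _ _ h2,
    diffMat_update h g e _ _ _ h3, diffMat_update h g e _ _ _ h4]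
  generalize diffMat h g i j = A
  generalize diffMat h g i j' = B
  generalize diffMat h g i' j = C
  generalize diffMat h g i' j' = D
  by_cases e1 : s(i, j) = e
  · subst e1
    simp only [if_true, if_neg n1.symm, if_neg n2.symm, if_neg n3.symm]
    exact ⟨-h s(i,j) * B * (C * D), B * (C * D), fun t => by ring⟩
  by_cases e2 : s(i, j') = e
  · subst e2
    simp only [if_true, if_neg n1, if_neg n4.symm, if_neg n5.symm]
    exact ⟨-h s(i,j') * A * (C * D), A * (C * D), fun t => by ring⟩
  by_cases e3 : s(i', j) = e
  · subst e3
    simp only [if_true, if_neg n2, if_neg n4, if_neg n6.symm]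
    exact ⟨-h s(i',j) * A * (B * D), A * (B * D), fun t => by ring⟩
  by_cases e4 : s(i', j') = e
  · subst e4
    simp only [if_true, if_neg n3, if_neg n5, if_neg n6]
    exact ⟨-h s(i',j') * A * (B * C), A * (B * C), fun t => by ring⟩
  simp only [if_neg e1, if_neg e2, if_neg e3, if_neg e4]
  exact ⟨A * B * (C * D), 0, fun t => by ring⟩

lemma quadSum_affine {n : ℕ} (h g : Sym2 (Fin n) → ℝ) (e : Sym2 (Fin n)) :
    ∃ a b : ℝ, ∀ t, quadSum h (Function.update g e t) = a + b * t := by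
  unfold quadSum
  refine affine_sum _ _ fun i _ => affine_sum _ _ fun i' _ => affine_sum _ _ fun j _ =>
    affine_sum _ _ fun j' _ => ?_
  by_cases hc : i ≠ i' ∧ j ≠ j'
  · simp only [if_pos hc]; exact quadTerm_affine h g e i i' j j' hc.1 hc.2
  · simp only [if_neg hc]; exact ⟨0, 0, by simp⟩

/-- Cauchy-Schwarz twice. -/
lemma cs_quad {n : ℕ} (D : Fin n → Fin n → ℝ) (a b : Fin n → ℝ) (c : ℝ) 
    (ha : ∀ i, a i ^ 2 ≤ c) (hb : ∀ i, b i ^ 2 ≤ c) (hc : 0 ≤ c) :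
    (∑ i, ∑ j, a i * b j * D i j) ^ 4 ≤
      (n * c) ^ 4 * ∑ i, ∑ i', ∑ j, ∑ j', D i j * D i j' * (D i' j * D i' j') := by
  have hsa : ∑ i, a i ^ 2 ≤ n * c := by
    calc _ ≤ ∑ i : Fin n, c := Finset.sum_le_sum fun i _ => ha i
      _ = _ := by simp
  have hsb : ∑ i, b i ^ 2 ≤ n * c := by
    calc _ ≤ ∑ i : Fin n, c := Finset.sum_le_sum fun i _ => hb i
      _ = _ := by simp
  have hsb0 : 0 ≤ ∑ i, b i ^ 2 := Finset.sum_nonneg fun i _ => sq_nonneg _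
  have hnc : 0 ≤ n * c := by positivity
  have e1 : ∑ i, ∑ j, a i * b j * D i j = ∑ i, a i * ∑ j, b j * D i j := by
    simp only [Finset.mul_sum, mul_assoc]
  have s1 := Finset.sum_mul_sq_le_sq_mul_sq Finset.univ a (fun i => ∑ j, b j * D i j)
  have e2 : ∑ i, (∑ j, b j * D i j) ^ 2 =
      ∑ p : Fin n × Fin n, (b p.1 * b p.2) * ∑ i, D i p.1 * D i p.2 := by
    simp only [sq, Finset.sum_mul_sum]
    simp only [Fintype.sum_prod_type, Finset.mul_sum]
    rw [Finset.sum_comm]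
    refine Finset.sum_congr rfl fun j _ => ?_
    rw [Finset.sum_comm]
    refine Finset.sum_congr rfl fun j' _ => Finset.sum_congr rfl fun i _ => by ring
  have s2 := Finset.sum_mul_sq_le_sq_mul_sq Finset.univ (fun p : Fin n × Fin n => b p.1 * b p.2)
    (fun p => ∑ i, D i p.1 * D i p.2)
  have e3 : ∑ p : Fin n × Fin n, (b p.1 * b p.2) ^ 2 = (∑ j, b j ^ 2) * (∑ j, b j ^ 2) := by
    simp only [Finset.sum_mul_sum, Fintype.sum_prod_type, mul_pow]
  have e4 : ∑ p : Fin n × Fin n, (∑ i, D i p.1 * D i p.2) ^ 2 =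
      ∑ i, ∑ i', ∑ j, ∑ j', D i j * D i j' * (D i' j * D i' j') := by
    simp only [sq, Finset.sum_mul_sum]
    rw [Finset.sum_comm]
    refine Finset.sum_congr rfl fun i _ => ?_
    rw [Finset.sum_comm]
    refine Finset.sum_congr rfl fun i' _ => ?_
    rw [Fintype.sum_prod_type]
  have hQ : 0 ≤ ∑ p : Fin n × Fin n, (∑ i, D i p.1 * D i p.2) ^ 2 :=
    Finset.sum_nonneg fun i _ => sq_nonneg _
  rw [e1, ← e4]
  rw [← e2, e3] at s2
  set X := ∑ i, a i * ∑ j, b j * D i j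
  set Y := ∑ i, (∑ j, b j * D i j) ^ 2
  have hY : 0 ≤ Y := Finset.sum_nonneg fun i _ => sq_nonneg _
  set Z := ∑ p : Fin n × Fin n, (∑ i, D i p.1 * D i p.2) ^ 2
  calc X ^ 4 = (X ^ 2) ^ 2 := by ring
    _ ≤ (n * c * Y) ^ 2 := by
        apply pow_le_pow_left₀ (sq_nonneg _)
        exact s1.trans (mul_le_mul_of_nonneg_right hsa hY)
    _ = (n * c) ^ 2 * Y ^ 2 := by ring
    _ ≤ (n * c) ^ 2 * ((n * c) * (n * c) * Z) := by
        apply mul_le_mul_of_nonneg_left _ (sq_nonneg _)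
        refine s2.trans (mul_le_mul_of_nonneg_right ?_ hQ)
        exact mul_le_mul hsb hsb hsb0 hnc
    _ = _ := by ring

/-- Deterministic rounding. -/
lemma exists_rounding {n : ℕ} (h : Sym2 (Fin n) → ℝ) (hh : ∀ e, h e ∈ Set.Icc (0:ℝ) 1) :
    ∃ g : Sym2 (Fin n) → ℝ, (∀ e, g e = 0 ∨ g e = 1) ∧ (∀ e, h e = 0 → g e = 0) ∧
      (∀ e, h e = 1 → g e = 1) ∧
      ∑ i, ∑ i', ∑ j, ∑ j', quadTerm h g i i' j j' ≤ 2 * (n : ℝ) ^ 3 := by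
  obtain ⟨g, g1, g2, g3, g4⟩ := exists_vertex (quadSum h) (fun g e => quadSum_affine h g e) h hh
  refine ⟨g, g1, g2, g3, ?_⟩
  have h0 : quadSum h h = 0 := by
    unfold quadSum quadTerm diffMat
    simp
  have hd : ∀ i j, |diffMat h g i j| ≤ 1 := by
    intro i j
    unfold diffMat
    split_ifs
    · simp
    · have := hh s(i,j)
      rcases g1 s(i,j) with h | h <;> rw [h, abs_le] <;> constructor <;> linarith [this.1, this.2]
  have hq : ∀ i i' j j', quadTerm h g i i' j j' ≤ 1 := by
    intro i i' j j'
    refine (le_abs_self _).trans ?_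
    unfold quadTerm
    rw [abs_mul, abs_mul, abs_mul]
    have p : ∀ x y : ℝ, 0 ≤ x → 0 ≤ y → x ≤ 1 → y ≤ 1 → x * y ≤ 1 := fun x y _ hy hx hy1 =>
      mul_le_one₀ hx hy hy1
    apply p _ _ (by positivity) (by positivity) <;> apply p _ _ (abs_nonneg _) (abs_nonneg _) <;>
      exact hd _ _
  have hle : ∀ i i' j j', quadTerm h g i i' j j' ≤
      (if i ≠ i' ∧ j ≠ j' then quadTerm h g i i' j j' else 0) + 
      ((if i = i' then 1 else 0) + (if j = j' then 1 else 0)) := by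
    intro i i' j j'
    have := hq i i' j j'
    by_cases hi : i = i' <;> by_cases hj : j = j' <;> simp [hi, hj] <;> 
      first | (subst hi; subst hj; linarith) | (subst hi; linarith) | (subst hj; linarith)
  calc _ ≤ ∑ i, ∑ i', ∑ j, ∑ j', ((if i ≠ i' ∧ j ≠ j' then quadTerm h g i i' j j' else 0) + 
      ((if i = i' then (1:ℝ) else 0) + (if j = j' then 1 else 0))) :=
        Finset.sum_le_sum fun i _ => Finset.sum_le_sum fun i' _ => Finset.sum_le_sum fun j _ =>
          Finset.sum_le_sum fun j' _ => hle i i' j j'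
    _ = quadSum h g + 2 * (n : ℝ) ^ 3 := by
        simp only [Finset.sum_add_distrib]
        congr 1
        simp
        ring
    _ ≤ _ := by linarith

/-! ### Counting lemma -/

/-- Lebesgue measure on `[0,1]`. -/
abbrev muI : Measure ℝ := volume.restrict (Set.Icc (0:ℝ) 1)

instance muI_prob : IsProbabilityMeasure muI := ⟨by simp [muI]⟩

lemma integral_mul_le_setIntegral {α : Type*} [MeasurableSpace α] {μ : Measure α}
    (a f : α → ℝ) (hf : Integrable f μ) (hfm : Measurable f) (ha : Measurable a)
    (ha0 : ∀ x, a x ∈ Set.Icc (0:ℝ) 1) :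
    ∫ x, a x * f x ∂μ ≤ ∫ x in {x | 0 ≤ f x}, f x ∂μ := by
  have hS : MeasurableSet {x | 0 ≤ f x} := measurableSet_le measurable_const hfm
  rw [← integral_indicator hS]
  refine integral_mono ?_ (hf.indicator hS) ?_
  · refine hf.bdd_mul (c := 1) ha.aestronglyMeasurable (Eventually.of_forall fun x => ?_)
    rw [Real.norm_eq_abs, abs_le]; constructor <;> linarith [(ha0 x).1, (ha0 x).2]
  · intro x
    obtain ⟨h0, h1⟩ := ha0 x
    by_cases hx : 0 ≤ f x
    · simp only [Set.indicator, Set.mem_ofPred_eq, hx, if_true]; nlinarith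
    · simp only [Set.indicator, Set.mem_ofPred_eq, hx, if_false]; nlinarith

lemma integrable_of_bdd {α : Type*} [MeasurableSpace α] {μ : Measure α} [IsFiniteMeasure μ]
    {f : α → ℝ} (hf : Measurable f) (C : ℝ) (hC : ∀ x, |f x| ≤ C) : Integrable f μ :=
  Integrable.of_bound hf.aestronglyMeasurable C (Eventually.of_forall hC)

lemma abs_integral_le_prob {α : Type*} [MeasurableSpace α] {μ : Measure α} [IsProbabilityMeasure μ]
    {f : α → ℝ} (C : ℝ) (hC : ∀ x, |f x| ≤ C) : |∫ x, f x ∂μ| ≤ C := by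
  have := norm_integral_le_of_norm_le_const (μ := μ) (f := f) (C := C) (Eventually.of_forall hC)
  simpa using this

lemma cut_fun_le (U : ℝ → ℝ → ℝ) (hU : Measurable (Function.uncurry U)) (hU1 : ∀ x y, |U x y| ≤ 1)
    (c : ℝ) (hc : ∀ S T : Set ℝ, MeasurableSet S → MeasurableSet T → S ⊆ Set.Icc 0 1 →
      T ⊆ Set.Icc 0 1 → |∫ p in S ×ˢ T, U p.1 p.2| ≤ c)
    (a b : ℝ → ℝ) (ha : Measurable a) (hb : Measurable b)
    (ha0 : ∀ x, a x ∈ Set.Icc (0:ℝ) 1) (hb0 : ∀ x, b x ∈ Set.Icc (0:ℝ) 1) :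
    ∫ s, ∫ t, a s * b t * U s t ∂muI ∂muI ≤ c := by
  have hbU : ∀ s t, |b t * U s t| ≤ 1 := by
    intro s t
    rw [abs_mul, abs_of_nonneg (hb0 t).1]
    exact mul_le_one₀ (hb0 t).2 (abs_nonneg _) (hU1 s t)
  have hbUm : Measurable (fun p : ℝ × ℝ => b p.2 * U p.1 p.2) :=
    (hb.comp measurable_snd).mul hU
  set φ : ℝ → ℝ := fun s => ∫ t, b t * U s t ∂muI with hφ
  have hφm : Measurable φ :=
    (StronglyMeasurable.integral_prod_right (ν := muI) hbUm.stronglyMeasurable).measurable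
  have hφb : ∀ s, |φ s| ≤ 1 := fun s => abs_integral_le_prob 1 (hbU s)
  have e1 : ∫ s, ∫ t, a s * b t * U s t ∂muI ∂muI = ∫ s, a s * φ s ∂muI := by
    congr 1; ext s; rw [hφ]; simp only [mul_assoc]; rw [integral_const_mul]
  rw [e1]
  refine (integral_mul_le_setIntegral a φ (integrable_of_bdd hφm 1 hφb) hφm ha ha0).trans ?_
  set S := {x | 0 ≤ φ x}
  have hS : MeasurableSet S := measurableSet_le measurable_const hφm
  set ψ : ℝ → ℝ := fun t => ∫ s in S, U s t ∂muI with hψ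
  have hψm : Measurable ψ :=
    (StronglyMeasurable.integral_prod_left (μ := muI.restrict S) hU.stronglyMeasurable).measurable
  have hi : Integrable (fun p : ℝ × ℝ => b p.2 * U p.1 p.2) ((muI.restrict S).prod muI) :=
    integrable_of_bdd hbUm 1 fun p => hbU _ _
  have e2 : ∫ s in S, φ s ∂muI = ∫ t, b t * ψ t ∂muI := by
    rw [hφ, integral_integral_swap hi]
    congr 1; ext t; rw [hψ]; simp only; rw [integral_const_mul]
  rw [e2]
  have hψi : Integrable ψ muI := by
    refine integrable_of_bdd hψm 1 fun t => ?_
    rw [hψ]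
    simp only
    have := norm_setIntegral_le_of_norm_le_const (μ := muI) (s := S) (f := fun s => U s t) (C := 1)
      (measure_lt_top _ _) (fun s _ => hU1 s t)
    refine this.trans ?_
    rw [one_mul]
    exact measureReal_le_one
  refine (integral_mul_le_setIntegral b ψ hψi hψm hb hb0).trans ?_
  set T := {x | 0 ≤ ψ x}
  have hT : MeasurableSet T := measurableSet_le measurable_const hψm
  have hi2 : Integrable (fun p : ℝ × ℝ => U p.1 p.2) ((muI.restrict S).prod (muI.restrict T)) :=
    integrable_of_bdd hU 1 fun p => hU1 _ _
  have e3 : ∫ t in T, ψ t ∂muI = ∫ p in (S ∩ Set.Icc 0 1) ×ˢ (T ∩ Set.Icc 0 1), U p.1 p.2 := by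
    rw [hψ, ← integral_integral_swap hi2, Measure.restrict_restrict hS, Measure.restrict_restrict hT,
      Measure.volume_eq_prod, ← Measure.prod_restrict, integral_prod]
    simpa [muI, Measure.restrict_restrict hS, Measure.restrict_restrict hT] using hi2
  rw [e3]
  exact (le_abs_self _).trans (hc _ _ (hS.inter measurableSet_Icc) (hT.inter measurableSet_Icc)
    Set.inter_subset_right Set.inter_subset_right)

lemma abs_cut_fun_le (U : ℝ → ℝ → ℝ) (hU : Measurable (Function.uncurry U))
    (hU1 : ∀ x y, |U x y| ≤ 1)
    (c : ℝ) (hc : ∀ S T : Set ℝ, MeasurableSet S → MeasurableSet T → S ⊆ Set.Icc 0 1 →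
      T ⊆ Set.Icc 0 1 → |∫ p in S ×ˢ T, U p.1 p.2| ≤ c)
    (a b : ℝ → ℝ) (ha : Measurable a) (hb : Measurable b)
    (ha0 : ∀ x, a x ∈ Set.Icc (0:ℝ) 1) (hb0 : ∀ x, b x ∈ Set.Icc (0:ℝ) 1) :
    |∫ s, ∫ t, a s * b t * U s t ∂muI ∂muI| ≤ c := by
  rw [abs_le']
  refine ⟨cut_fun_le U hU hU1 c hc a b ha hb ha0 hb0, ?_⟩
  have := cut_fun_le (fun x y => - U x y) hU.neg (by simpa using hU1) c (by
    intro S T hS hT h1 h2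
    rw [integral_neg, abs_neg]
    exact hc S T hS hT h1 h2) a b ha hb ha0 hb0
  simpa only [mul_neg, integral_neg] using this

lemma update_mp {m : ℕ} (i : Fin m) :
    MeasurePreserving (fun p : (Fin m → ℝ) × ℝ => Function.update p.1 i p.2)
      ((Measure.pi fun _ => muI).prod muI) (Measure.pi fun _ => muI) := by
  have hm : Measurable (fun p : (Fin m → ℝ) × ℝ => Function.update p.1 i p.2) := by
    refine measurable_pi_iff.2 fun k => ?_
    by_cases hk : k = i
    · subst hk; simpa using measurable_snd
    · simp only [Function.update_of_ne hk]
      exact (measurable_pi_apply k).comp measurable_fst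
  refine ⟨hm, ?_⟩
  symm
  refine Measure.pi_eq fun s hs => ?_
  rw [Measure.map_apply hm (MeasurableSet.univ_pi hs)]
  have : (fun p : (Fin m → ℝ) × ℝ => Function.update p.1 i p.2) ⁻¹' (Set.univ.pi s) =
      (Set.univ.pi (Function.update s i Set.univ)) ×ˢ (s i) := by
    ext ⟨x, t⟩
    simp only [Set.mem_preimage, Set.mem_pi, Set.mem_univ, true_imp_iff, Set.mem_prod]
    constructor
    · intro h
      refine ⟨fun k => ?_, by simpa using h i⟩
      by_cases hk : k = i
      · subst hk; simp
      · simpa [Function.update_of_ne hk] using h k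
    · rintro ⟨h, ht⟩ k
      by_cases hk : k = i
      · subst hk; simpa using ht
      · simpa [Function.update_of_ne hk] using h k
  rw [this, Measure.prod_prod, Measure.pi_pi, ← Finset.mul_prod_erase _ _ (Finset.mem_univ i),
    ← Finset.mul_prod_erase Finset.univ (fun k => muI (s k)) (Finset.mem_univ i)]
  rw [Function.update_self, measure_univ, one_mul, mul_comm]
  congr 1
  refine Finset.prod_congr rfl fun k hk => ?_
  rw [Function.update_of_ne (Finset.ne_of_mem_erase hk)]

lemma integral_update {m : ℕ} (i : Fin m) (F : (Fin m → ℝ) → ℝ) (hF : Measurable F) (C : ℝ)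
    (hC : ∀ x, |F x| ≤ C) :
    ∫ x, F x ∂(Measure.pi fun _ => muI) =
      ∫ x, ∫ s, F (Function.update x i s) ∂muI ∂(Measure.pi fun _ => muI) := by
  have h := update_mp i
  conv_lhs => rw [← h.map_eq]
  rw [integral_map h.measurable.aemeasurable hF.aestronglyMeasurable, integral_prod]
  exact integrable_of_bdd (hF.comp h.measurable) C fun p => hC _

lemma abs_integral_cut_le {m : ℕ} (i j : Fin m) (hij : i ≠ j) (A B : (Fin m → ℝ) → ℝ)
    (hA : Measurable A) (hB : Measurable B) (hA0 : ∀ x, A x ∈ Set.Icc (0:ℝ) 1)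
    (hB0 : ∀ x, B x ∈ Set.Icc (0:ℝ) 1)
    (hAj : ∀ x t, A (Function.update x j t) = A x) (hBi : ∀ x t, B (Function.update x i t) = B x)
    (U : ℝ → ℝ → ℝ) (hU : Measurable (Function.uncurry U)) (hU1 : ∀ x y, |U x y| ≤ 1)
    (c : ℝ) (hc : ∀ S T : Set ℝ, MeasurableSet S → MeasurableSet T → S ⊆ Set.Icc 0 1 →
      T ⊆ Set.Icc 0 1 → |∫ p in S ×ˢ T, U p.1 p.2| ≤ c) :
    |∫ x, A x * B x * U (x i) (x j) ∂(Measure.pi fun _ => muI)| ≤ c := by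
  have hUm : Measurable fun x : Fin m → ℝ => U (x i) (x j) :=
    (show Measurable (Function.uncurry U ∘ fun x : Fin m → ℝ => (x i, x j)) from
      hU.comp ((measurable_pi_apply i).prodMk (measurable_pi_apply j)))
  have hb : ∀ x, |A x * B x * U (x i) (x j)| ≤ 1 := by
    intro x
    rw [abs_mul, abs_mul, abs_of_nonneg (hA0 x).1, abs_of_nonneg (hB0 x).1]
    exact mul_le_one₀ (mul_le_one₀ (hA0 x).2 (hB0 x).1 (hB0 x).2) (abs_nonneg _) (hU1 _ _)
  have hFm : Measurable fun x => A x * B x * U (x i) (x j) := (hA.mul hB).mul hUm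
  rw [integral_update j _ hFm 1 hb]
  have hG : Measurable fun x => ∫ s, (fun x => A x * B x * U (x i) (x j))
      (Function.update x j s) ∂muI :=
    (StronglyMeasurable.integral_prod_right' (ν := muI)
      (hFm.comp (update_mp j).measurable).stronglyMeasurable).measurable
  rw [integral_update i _ hG 1 (fun x => abs_integral_le_prob 1 fun s => hb _)]
  refine abs_integral_le_prob c fun x => ?_
  have hupd : ∀ k, Measurable fun s : ℝ => Function.update x k s := fun k =>
    (update_mp k).measurable.comp (measurable_const.prodMk measurable_id)
  have := abs_cut_fun_le U hU hU1 c hc (fun s => A (Function.update x i s))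
    (fun t => B (Function.update x j t)) (hA.comp (hupd i)) (hB.comp (hupd j))
    (fun s => hA0 _) (fun s => hB0 _)
  convert this using 6 with s t
  simp only
  rw [hAj]
  have e1 : Function.update (Function.update x i s) j t i = s := by
    rw [Function.update_of_ne hij, Function.update_self]
  rw [e1, Function.update_self, Function.update_comm hij, hBi]

open Classical in
/-- factor of the induced density integrand -/
def fac {m : ℕ} (F : SimpleGraph (Fin m)) (V : ℝ → ℝ → ℝ) (e : Fin m × Fin m)
    (x : Fin m → ℝ) : ℝ :=
  if e.1 < e.2 then (if F.Adj e.1 e.2 then V (x e.1) (x e.2) else 1 - V (x e.1) (x e.2)) else 1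

/-- measurable with values in `[0,1]` -/
def IsKer (V : ℝ → ℝ → ℝ) : Prop :=
  Measurable (Function.uncurry V) ∧ ∀ x y, V x y ∈ Set.Icc (0:ℝ) 1

lemma fac_mem {m : ℕ} (F : SimpleGraph (Fin m)) {V : ℝ → ℝ → ℝ} (hV : IsKer V)
    (e : Fin m × Fin m) (x : Fin m → ℝ) : fac F V e x ∈ Set.Icc (0:ℝ) 1 := by
  have := hV.2 (x e.1) (x e.2)
  unfold fac
  split_ifs
  · exact this
  · constructor <;> linarith [this.1, this.2]
  · simp

lemma fac_meas {m : ℕ} (F : SimpleGraph (Fin m)) {V : ℝ → ℝ → ℝ} (hV : IsKer V)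
    (e : Fin m × Fin m) : Measurable (fac F V e) := by
  have : Measurable fun x : Fin m → ℝ => V (x e.1) (x e.2) :=
    (show Measurable (Function.uncurry V ∘ fun x : Fin m → ℝ => (x e.1, x e.2)) from
      hV.1.comp ((measurable_pi_apply e.1).prodMk (measurable_pi_apply e.2)))
  unfold fac
  split_ifs
  · exact this
  · exact measurable_const.sub this
  · exact measurable_const

lemma fac_update {m : ℕ} (F : SimpleGraph (Fin m)) (V : ℝ → ℝ → ℝ)
    (e : Fin m × Fin m) (k : Fin m) (h1 : e.1 ≠ k) (h2 : e.2 ≠ k) (x : Fin m → ℝ) (t : ℝ) :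
    fac F V e (Function.update x k t) = fac F V e x := by
  unfold fac
  rw [Function.update_of_ne h1, Function.update_of_ne h2]

lemma prod_fac_mem {m : ℕ} (F : SimpleGraph (Fin m)) (V : Fin m × Fin m → ℝ → ℝ → ℝ)
    (hV : ∀ e, IsKer (V e)) (s : Finset (Fin m × Fin m)) (x : Fin m → ℝ) :
    ∏ e ∈ s, fac F (V e) e x ∈ Set.Icc (0:ℝ) 1 :=
  ⟨Finset.prod_nonneg fun e _ => (fac_mem F (hV e) e x).1,
    Finset.prod_le_one (fun e _ => (fac_mem F (hV e) e x).1) fun e _ => (fac_mem F (hV e) e x).2⟩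

lemma prod_fac_meas {m : ℕ} (F : SimpleGraph (Fin m)) (V : Fin m × Fin m → ℝ → ℝ → ℝ)
    (hV : ∀ e, IsKer (V e)) (s : Finset (Fin m × Fin m)) :
    Measurable fun x => ∏ e ∈ s, fac F (V e) e x :=
  Finset.measurable_prod _ fun e _ => fac_meas F (hV e) e

lemma inducedDensity_eq {m : ℕ} (F : SimpleGraph (Fin m)) (W : ℝ → ℝ → ℝ) :
    inducedDensity F W = ∫ x, ∏ e, fac F W e x ∂(Measure.pi fun _ : Fin m => muI) := by
  unfold inducedDensity
  rw [volume_pi, Measure.restrict_pi_pi]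
  simp only [fac, Fintype.prod_prod_type]

lemma step_le {m : ℕ} (F : SimpleGraph (Fin m)) (V : Fin m × Fin m → ℝ → ℝ → ℝ)
    (hV : ∀ e, IsKer (V e)) (e : Fin m × Fin m) (W₁ W₂ : ℝ → ℝ → ℝ) (h1 : IsKer W₁) (h2 : IsKer W₂)
    (c : ℝ) (hc : ∀ S T : Set ℝ, MeasurableSet S → MeasurableSet T → S ⊆ Set.Icc 0 1 →
      T ⊆ Set.Icc 0 1 → |∫ p in S ×ˢ T, (W₁ p.1 p.2 - W₂ p.1 p.2)| ≤ c) :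
    |∫ x, (∏ e' ∈ Finset.univ.erase e, fac F (V e') e' x) * fac F W₁ e x
        ∂(Measure.pi fun _ : Fin m => muI) -
      ∫ x, (∏ e' ∈ Finset.univ.erase e, fac F (V e') e' x) * fac F W₂ e x
        ∂(Measure.pi fun _ : Fin m => muI)| ≤ c := by
  have hc0 : 0 ≤ c := (abs_nonneg _).trans (hc ∅ ∅ MeasurableSet.empty MeasurableSet.empty
    (Set.empty_subset _) (Set.empty_subset _))
  have hintg : ∀ W, IsKer W → Integrable (fun x =>
      (∏ e' ∈ Finset.univ.erase e, fac F (V e') e' x) * fac F W e x)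
        (Measure.pi fun _ : Fin m => muI) := by
    intro W hW
    refine integrable_of_bdd ((prod_fac_meas F V hV _).mul (fac_meas F hW e)) 1 fun x => ?_
    have a := prod_fac_mem F V hV (Finset.univ.erase e) x
    have b := fac_mem F hW e x
    rw [abs_mul, abs_of_nonneg a.1, abs_of_nonneg b.1]
    exact mul_le_one₀ a.2 b.1 b.2
  rw [← integral_sub (hintg _ h1) (hintg _ h2)]
  by_cases hlt : e.1 < e.2
  · set P : Finset (Fin m × Fin m) := (Finset.univ.erase e).filter fun e' => e'.1 = e.2 ∨ e'.2 = e.2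
      with hP
    set R : Finset (Fin m × Fin m) :=
      (Finset.univ.erase e).filter fun e' => ¬ (e'.1 = e.2 ∨ e'.2 = e.2) with hR
    have hcut := abs_integral_cut_le e.1 e.2 hlt.ne (fun x => ∏ e' ∈ R, fac F (V e') e' x)
      (fun x => ∏ e' ∈ P, fac F (V e') e' x) (prod_fac_meas F V hV _) (prod_fac_meas F V hV _)
      (prod_fac_mem F V hV _) (prod_fac_mem F V hV _)
      (by
        intro x t
        refine Finset.prod_congr rfl fun e' he' => ?_
        rw [hR, Finset.mem_filter] at he'
        push Not at he'
        exact fac_update _ _ _ _ he'.2.1 he'.2.2 _ _)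
      (by
        intro x t
        refine Finset.prod_congr rfl fun e' he' => ?_
        rw [hP, Finset.mem_filter] at he'
        by_cases hl : e'.1 < e'.2
        · have hne : e' ≠ e := Finset.ne_of_mem_erase he'.1
          have hne' : ¬ (e'.1 = e.1 ∧ e'.2 = e.2) := fun h => hne (Prod.ext h.1 h.2)
          apply fac_update
          · rcases he'.2 with h | h
            · intro h'; rw [h'] at h; exact hlt.ne h
            · intro h'; exact hne' ⟨h', h⟩
          · rcases he'.2 with h | h
            · intro h'; rw [h, h'] at hl; exact absurd hl (not_lt.2 hlt.le)
            · intro h'; rw [h] at h'; exact hlt.ne h'.symm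
        · unfold fac; rw [if_neg hl, if_neg hl])
      (fun x y => W₁ x y - W₂ x y) (h1.1.sub h2.1) (by
        intro x y
        have a := h1.2 x y
        have b := h2.2 x y
        rw [abs_le]; constructor <;> linarith [a.1, a.2, b.1, b.2]) c hc
    have hsplit : ∀ x, ∏ e' ∈ Finset.univ.erase e, fac F (V e') e' x =
        (∏ e' ∈ R, fac F (V e') e' x) * ∏ e' ∈ P, fac F (V e') e' x := by
      intro x
      rw [mul_comm]
      exact (Finset.prod_filter_mul_prod_filter_not _ _ _).symm
    by_cases hF : F.Adj e.1 e.2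
    · convert hcut using 4 with x
      rw [hsplit x]
      simp only [fac, if_pos hlt, if_pos hF]
      ring
    · rw [← abs_neg, ← integral_neg]
      convert hcut using 4 with x
      rw [hsplit x]
      simp only [fac, if_pos hlt, if_neg hF]
      ring
  · have : ∀ W x, fac F W e x = 1 := fun W x => by unfold fac; rw [if_neg hlt]
    simpa only [this, sub_self, integral_zero, abs_zero] using hc0

lemma counting {m : ℕ} (F : SimpleGraph (Fin m)) (W₁ W₂ : ℝ → ℝ → ℝ) (h1 : IsKer W₁)
    (h2 : IsKer W₂) 
    (c : ℝ) (hc : ∀ S T : Set ℝ, MeasurableSet S → MeasurableSet T → S ⊆ Set.Icc 0 1 →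
      T ⊆ Set.Icc 0 1 → |∫ p in S ×ˢ T, (W₁ p.1 p.2 - W₂ p.1 p.2)| ≤ c) :
    |inducedDensity F W₁ - inducedDensity F W₂| ≤ (m * m : ℝ) * c := by
  have key : ∀ D : Finset (Fin m × Fin m),
      |∫ x, ∏ e, fac F (if e ∈ D then W₁ else W₂) e x ∂(Measure.pi fun _ : Fin m => muI) -
        ∫ x, ∏ e, fac F W₂ e x ∂(Measure.pi fun _ : Fin m => muI)| ≤ D.card * c := by
    intro D
    induction D using Finset.induction_on with
    | empty => simp
    | insert e D he ih =>
      have hs := step_le F (fun e => if e ∈ D then W₁ else W₂) (by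
        intro e'
        split_ifs
        · exact h1
        · exact h2) e W₁ W₂ h1 h2 c hc
      have ea : ∀ x, ∏ e', fac F (if e' ∈ insert e D then W₁ else W₂) e' x =
          (∏ e' ∈ Finset.univ.erase e, fac F (if e' ∈ D then W₁ else W₂) e' x) * fac F W₁ e x := by
        intro x
        rw [← Finset.prod_erase_mul _ _ (Finset.mem_univ e), if_pos (Finset.mem_insert_self e D)]
        congr 1
        refine Finset.prod_congr rfl fun e' he' => ?_
        simp [Finset.mem_insert, Finset.ne_of_mem_erase he']
      have eb : ∀ x, ∏ e', fac F (if e' ∈ D then W₁ else W₂) e' x =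
          (∏ e' ∈ Finset.univ.erase e, fac F (if e' ∈ D then W₁ else W₂) e' x) * fac F W₂ e x := by
        intro x
        rw [← Finset.prod_erase_mul _ _ (Finset.mem_univ e), if_neg he]
      simp only [ea]
      simp only [eb] at ih
      rw [Finset.card_insert_of_notMem he]
      push_cast
      refine (abs_sub_le _ _ _).trans ((add_le_add hs ih).trans (le_of_eq (by ring)))
  have := key Finset.univ
  simpa [inducedDensity_eq] using this

/-! ### Forward direction -/

lemma inducedDensity_comp {m : ℕ} (F : SimpleGraph (Fin m)) {W : ℝ → ℝ → ℝ} (hW : IsKer W)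
    {σ : ℝ → ℝ} (hσ : IsMPSelf σ) :
    inducedDensity F (fun x y => W (σ x) (σ y)) = inducedDensity F W := by
  rw [inducedDensity_eq, inducedDensity_eq]
  have h : MeasurePreserving (fun (a : Fin m → ℝ) i => σ (a i)) (Measure.pi fun _ : Fin m => muI)
      (Measure.pi fun _ : Fin m => muI) :=
    measurePreserving_pi (fun _ => muI) (fun _ => muI) (fun _ => hσ.1)
  conv_rhs => rw [← h.map_eq]
  rw [integral_map h.measurable.aemeasurable
    (prod_fac_meas F (fun _ => W) (fun _ => hW) Finset.univ).aestronglyMeasurable]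
  rfl

lemma IsKer.comp {W : ℝ → ℝ → ℝ} (hW : IsKer W) {σ : ℝ → ℝ} (hσ : Measurable σ) :
    IsKer (fun x y => W (σ x) (σ y)) :=
  ⟨(show Measurable (Function.uncurry W ∘ fun p : ℝ × ℝ => (σ p.1, σ p.2)) from
    hW.1.comp ((hσ.comp measurable_fst).prodMk (hσ.comp measurable_snd))), fun _ _ => hW.2 _ _⟩

/-- The `i`-th cell. -/
def cell (n : ℕ) (i : Fin n) : Set ℝ := {x | ⌈(n:ℝ) * x⌉ = ((i:ℕ):ℤ) + 1}

lemma measurableSet_cell (n : ℕ) (i : Fin n) : MeasurableSet (cell n i) := by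
  have : Measurable fun x : ℝ => ⌈(n:ℝ) * x⌉ := Int.measurable_ceil.comp (measurable_const_mul _)
  exact this (measurableSet_singleton _)

lemma isKer_graphonOfGraph {n : ℕ} (G : SimpleGraph (Fin n)) : IsKer (graphonOfGraph G) := by
  classical
  constructor
  · have : Function.uncurry (graphonOfGraph G) = fun p : ℝ × ℝ =>
      if p ∈ (⋃ (i : Fin n) (j : Fin n) (_ : G.Adj i j), cell n i ×ˢ cell n j) then (1:ℝ) else 0 := by
      ext ⟨x, y⟩
      simp only [graphonOfGraph, cell, Function.uncurry_apply_pair, Set.mem_iUnion, Set.mem_prod,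
        Set.mem_ofPred_eq, exists_prop]
    rw [this]
    refine Measurable.ite ?_ measurable_const measurable_const
    refine MeasurableSet.iUnion fun i => MeasurableSet.iUnion fun j => MeasurableSet.iUnion fun _ =>
      (measurableSet_cell n i).prod (measurableSet_cell n j)
  · intro x y
    unfold graphonOfGraph
    split_ifs <;> simp

open Classical in
lemma graphonOfGraph_cell {n : ℕ} (G : SimpleGraph (Fin n)) {x y : ℝ} {i j : Fin n}
    (hx : x ∈ cell n i) (hy : y ∈ cell n j) :
    graphonOfGraph G x y = if G.Adj i j then 1 else 0 := by
  unfold graphonOfGraph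
  refine if_congr ?_ rfl rfl
  constructor
  · rintro ⟨i', j', h, h1, h2⟩
    have hx' : ⌈(n:ℝ) * x⌉ = ((i:ℕ):ℤ) + 1 := hx
    have hy' : ⌈(n:ℝ) * y⌉ = ((j:ℕ):ℤ) + 1 := hy
    have e1 : i = i' := by ext; omega
    have e2 : j = j' := by ext; omega
    rw [e1, e2]; exact h
  · intro h
    exact ⟨i, j, h, hx, hy⟩

lemma exists_cell {n : ℕ} (hn : 1 ≤ n) {x : ℝ} (h0 : 0 < x) (h1 : x ≤ 1) :
    ∃ i : Fin n, x ∈ cell n i := by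
  have hn' : (1:ℝ) ≤ n := by exact_mod_cast hn
  have p1 : 0 < ⌈(n:ℝ) * x⌉ := Int.ceil_pos.2 (by positivity)
  have p2 : ⌈(n:ℝ) * x⌉ ≤ n := Int.ceil_le.2 (by push_cast; nlinarith)
  refine ⟨⟨(⌈(n:ℝ) * x⌉ - 1).toNat, by omega⟩, ?_⟩
  change ⌈(n:ℝ) * x⌉ = _
  simp only
  omega

lemma mem_cell_iff {n : ℕ} {i : Fin n} {x : ℝ} (hn : 1 ≤ n) :
    x ∈ cell n i ↔ ((i:ℕ):ℝ) / n < x ∧ x ≤ (((i:ℕ):ℝ) + 1) / n := by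
  have hn' : (0:ℝ) < n := by exact_mod_cast hn
  change ⌈(n:ℝ) * x⌉ = ((i:ℕ):ℤ) + 1 ↔ _
  rw [Int.ceil_eq_iff, div_lt_iff₀ hn', le_div_iff₀ hn']
  push_cast
  rw [add_sub_cancel_right, mul_comm x]

lemma abs_sub_le_of_cell {n : ℕ} (hn : 1 ≤ n) {i : Fin n} {x y : ℝ} (hx : x ∈ cell n i)
    (hy : y ∈ cell n i) : |x - y| ≤ 1 / n := by
  rw [mem_cell_iff hn, add_div] at hx hy
  rw [abs_le]
  constructor <;> linarith [hx.1, hx.2, hy.1, hy.2]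

lemma comap_mem_of_injective {Q : GraphClass} (hQ : IsHereditary Q) {m n : ℕ} (v : Fin m → Fin n)
    (hv : Function.Injective v) (G : SimpleGraph (Fin n)) (hG : G ∈ Q n) : G.comap v ∈ Q m := by
  have hs : StrictMono (v ∘ Tuple.sort v) :=
    (Tuple.monotone_sort v).strictMono_of_injective (hv.comp (Tuple.sort v).injective)
  have := hQ.1 m (Tuple.sort v)⁻¹ _ (hQ.2 m n _ hs G hG)
  convert this using 1
  ext a b
  simp

lemma ae_pos (m : ℕ) : ∀ᵐ x ∂(Measure.pi fun _ : Fin m => muI), ∀ i, 0 < x i ∧ x i ≤ 1 := by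
  rw [ae_all_iff]
  intro i
  refine (measurePreserving_eval (fun _ : Fin m => muI) i).quasiMeasurePreserving.ae
    (p := fun y => 0 < y ∧ y ≤ 1) ?_
  have h1 : ∀ᵐ y ∂muI, y ∈ Set.Icc (0:ℝ) 1 := ae_restrict_mem measurableSet_Icc
  have h2 : ∀ᵐ y ∂muI, y ≠ 0 := ae_restrict_of_ae (Measure.ae_ne volume 0)
  filter_upwards [h1, h2] with y a b
  exact ⟨lt_of_le_of_ne a.1 b.symm, a.2⟩

lemma prod_fac_eq_zero {Q : GraphClass} (hQ : IsHereditary Q) {m n : ℕ} (hn : 1 ≤ n)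
    (F : SimpleGraph (Fin m)) (hF : F ∉ Q m) (G : SimpleGraph (Fin n)) (hG : G ∈ Q n)
    (x : Fin m → ℝ) (hx : ∀ i, 0 < x i ∧ x i ≤ 1)
    (hfar : ∀ i j, i < j → ¬ |x i - x j| ≤ 1 / n) :
    ∏ e, fac F (graphonOfGraph G) e x = 0 := by
  classical
  choose v hv using fun i => exists_cell hn (hx i).1 (hx i).2
  have hlt : ∀ i j, i < j → v i ≠ v j := by
    intro i j hij h
    refine hfar i j hij (abs_sub_le_of_cell hn (hv i) ?_)
    rw [h]; exact hv j
  have hinj : Function.Injective v := by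
    intro i j h
    by_contra hne
    rcases lt_or_gt_of_ne hne with hl | hl
    · exact hlt i j hl h
    · exact hlt j i hl h.symm
  have hmem := comap_mem_of_injective hQ v hinj G hG
  by_contra hprod
  apply hF
  have hall : ∀ i j, i < j → (F.Adj i j ↔ G.Adj (v i) (v j)) := by
    intro i j hij
    have := (Finset.prod_ne_zero_iff.1 hprod) (i, j) (Finset.mem_univ _)
    simp only [fac, if_pos hij, graphonOfGraph_cell G (hv i) (hv j)] at this
    by_cases h1 : F.Adj i j <;> by_cases h2 : G.Adj (v i) (v j) <;> simp_all
  have : F = G.comap v := by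
    ext i j
    rw [SimpleGraph.comap_adj]
    rcases lt_trichotomy i j with h | h | h
    · exact hall i j h
    · subst h; simp
    · rw [F.adj_comm, G.adj_comm]; exact hall j i h
  rw [this]; exact hmem

lemma close_integral_le {m n : ℕ} (hn : 1 ≤ n) (i j : Fin m) (hij : i ≠ j) :
    ∫ x, ({x : Fin m → ℝ | |x i - x j| ≤ 1 / n}.indicator (fun _ => (1:ℝ))) x
      ∂(Measure.pi fun _ : Fin m => muI) ≤ 2 / n := by
  have hS : MeasurableSet {x : Fin m → ℝ | |x i - x j| ≤ 1 / n} :=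
    measurableSet_le ((measurable_pi_apply i).sub (measurable_pi_apply j)).abs measurable_const
  have hb : ∀ x, |({x : Fin m → ℝ | |x i - x j| ≤ 1 / n}.indicator (fun _ => (1:ℝ))) x| ≤ 1 := by
    intro x
    unfold Set.indicator
    split_ifs <;> simp
  rw [integral_update i _ (measurable_const.indicator hS) 1 hb]
  refine (le_abs_self _).trans (abs_integral_le_prob _ fun x => ?_)
  have : ∀ s, ({x : Fin m → ℝ | |x i - x j| ≤ 1 / n}.indicator (fun _ => (1:ℝ)))
      (Function.update x i s) = (Metric.closedBall (x j) (1/n)).indicator (fun _ => (1:ℝ)) s := by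
    intro s
    simp [Set.indicator, Function.update_of_ne hij.symm, Real.dist_eq]
  simp only [this]
  rw [integral_indicator Metric.isClosed_closedBall.measurableSet]
  simp only [integral_const, smul_eq_mul, mul_one]
  rw [abs_of_nonneg measureReal_nonneg]
  calc _ ≤ volume.real (Metric.closedBall (x j) (1/n)) := by
        rw [measureReal_restrict_apply_univ, muI]
        refine ENNReal.toReal_mono ?_ (Measure.restrict_le_self _)
        exact measure_closedBall_lt_top.ne
    _ = 2 / n := by
        rw [Real.volume_real_closedBall (by positivity)]; ring

lemma density_graph_le {Q : GraphClass} (hQ : IsHereditary Q) {m n : ℕ} (hn : 1 ≤ n)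
    (F : SimpleGraph (Fin m)) (hF : F ∉ Q m) (G : SimpleGraph (Fin n)) (hG : G ∈ Q n) :
    inducedDensity F (graphonOfGraph G) ≤ (m * m : ℝ) * (2 / n) := by
  classical
  rw [inducedDensity_eq]
  set ind : Fin m × Fin m → (Fin m → ℝ) → ℝ := fun e x => if e.1 < e.2 then
    ({x : Fin m → ℝ | |x e.1 - x e.2| ≤ 1 / n}.indicator (fun _ => (1:ℝ))) x else 0 with hind
  have hK := isKer_graphonOfGraph G
  have hintg : ∀ e, Integrable (ind e) (Measure.pi fun _ : Fin m => muI) := by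
    intro e
    rw [hind]
    by_cases h : e.1 < e.2
    · simp only [if_pos h]
      have hS : MeasurableSet {x : Fin m → ℝ | |x e.1 - x e.2| ≤ 1 / n} :=
        measurableSet_le ((measurable_pi_apply e.1).sub (measurable_pi_apply e.2)).abs measurable_const
      exact (integrable_const 1).indicator hS
    · simp only [if_neg h]; exact integrable_zero _ _ _
  have hnn : ∀ e x, 0 ≤ ind e x := by
    intro e x
    simp only [hind, Set.indicator]
    split_ifs <;> simp
  calc _ ≤ ∫ x, ∑ e, ind e x ∂(Measure.pi fun _ : Fin m => muI) := by
        refine integral_mono_ae ?_ (integrable_finsetSum _ fun e _ => hintg e) ?_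
        · refine integrable_of_bdd (prod_fac_meas F (fun _ => graphonOfGraph G) (fun _ => hK) _) 1
            fun x => ?_
          have := prod_fac_mem F (fun _ => graphonOfGraph G) (fun _ => hK) Finset.univ x
          rw [abs_of_nonneg this.1]; exact this.2
        · filter_upwards [ae_pos m] with x hx
          by_cases hfar : ∀ i j, i < j → ¬ |x i - x j| ≤ 1 / n
          · rw [prod_fac_eq_zero hQ hn F hF G hG x hx hfar]
            exact Finset.sum_nonneg fun e _ => hnn e x
          · push Not at hfar
            obtain ⟨i, j, hij, hcl⟩ := hfar
            refine (prod_fac_mem F (fun _ => graphonOfGraph G) (fun _ => hK) Finset.univ x).2.trans ?_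
            refine le_trans ?_ (Finset.single_le_sum (fun e _ => hnn e x) (Finset.mem_univ (i, j)))
            simp only [hind, if_pos hij, Set.indicator, Set.mem_ofPred_eq, if_pos hcl]
            exact le_rfl
    _ = ∑ e, ∫ x, ind e x ∂(Measure.pi fun _ : Fin m => muI) :=
        integral_finsetSum _ fun e _ => hintg e
    _ ≤ ∑ e : Fin m × Fin m, (2 / n : ℝ) := by
        refine Finset.sum_le_sum fun e _ => ?_
        by_cases h : e.1 < e.2
        · simp only [hind, if_pos h]; exact close_integral_le hn _ _ h.ne
        · simp only [hind, if_neg h, integral_zero]; positivity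
    _ = _ := by simp

lemma bdd_of_ker {U : ℝ → ℝ → ℝ} (hU : ∀ x y, |U x y| ≤ 1) {S T : Set ℝ} 
    (h1 : S ⊆ Set.Icc 0 1) (h2 : T ⊆ Set.Icc 0 1) : |∫ p in S ×ˢ T, U p.1 p.2| ≤ 1 := by
  have hv : volume (S ×ˢ T) ≤ 1 := by
    calc volume (S ×ˢ T) ≤ volume (Set.Icc (0:ℝ) 1 ×ˢ Set.Icc (0:ℝ) 1) :=
          measure_mono (Set.prod_mono h1 h2)
      _ = 1 := by rw [Measure.volume_eq_prod, Measure.prod_prod]; simp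
  have := norm_setIntegral_le_of_norm_le_const (μ := volume) (s := S ×ˢ T)
    (f := fun p : ℝ × ℝ => U p.1 p.2) (C := 1) (hv.trans_lt ENNReal.one_lt_top)
    (fun p _ => hU p.1 p.2)
  refine this.trans ?_
  rw [one_mul]
  exact ENNReal.toReal_le_of_le_ofReal zero_le_one (by simpa using hv)

lemma le_cutNorm {U : ℝ → ℝ → ℝ} (hU : ∀ x y, |U x y| ≤ 1) (S T : Set ℝ) (hS : MeasurableSet S)
    (hT : MeasurableSet T) (h1 : S ⊆ Set.Icc 0 1) (h2 : T ⊆ Set.Icc 0 1) :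
    |∫ p in S ×ˢ T, U p.1 p.2| ≤ cutNorm U := by
  refine le_csSup ⟨1, ?_⟩ ⟨S, T, hS, hT, h1, h2, rfl⟩
  rintro r ⟨S, T, -, -, h1, h2, rfl⟩
  exact bdd_of_ker hU h1 h2

lemma cutNorm_nonneg (U : ℝ → ℝ → ℝ) : 0 ≤ cutNorm U := by
  refine Real.sSup_nonneg ?_
  rintro r ⟨S, T, -, -, -, -, rfl⟩
  exact abs_nonneg _

lemma isMPSelf_id : IsMPSelf id := ⟨MeasurePreserving.id _, Set.mapsTo_id _⟩

lemma deltaCut_nonneg (W₁ W₂ : ℝ → ℝ → ℝ) : 0 ≤ deltaCut W₁ W₂ := by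
  refine Real.sInf_nonneg ?_
  rintro r ⟨σ₁, σ₂, -, -, rfl⟩
  exact cutNorm_nonneg _

lemma IsKer.abs_sub_le {W₁ W₂ : ℝ → ℝ → ℝ} (h1 : IsKer W₁) (h2 : IsKer W₂) (x y : ℝ) :
    |W₁ x y - W₂ x y| ≤ 1 := by
  have a := h1.2 x y
  have b := h2.2 x y
  rw [abs_le]; constructor <;> linarith [a.1, a.2, b.1, b.2]

lemma counting_delta {m : ℕ} (F : SimpleGraph (Fin m)) (W₁ W₂ : ℝ → ℝ → ℝ) (h1 : IsKer W₁)
    (h2 : IsKer W₂) : |inducedDensity F W₁ - inducedDensity F W₂| ≤ (m * m : ℝ) * deltaCut W₁ W₂ := by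
  refine le_of_forall_pos_le_add fun ε hε => ?_
  have hε' : 0 < ε / (m * m + 1 : ℝ) := by positivity
  obtain ⟨r, ⟨σ₁, σ₂, hσ₁, hσ₂, rfl⟩, hr⟩ := exists_lt_of_csInf_lt
    (s := { r : ℝ | ∃ σ₁ σ₂ : ℝ → ℝ, IsMPSelf σ₁ ∧ IsMPSelf σ₂ ∧
      r = cutNorm (fun x y => W₁ (σ₁ x) (σ₁ y) - W₂ (σ₂ x) (σ₂ y)) })
    ⟨_, id, id, isMPSelf_id, isMPSelf_id, rfl⟩
    (show deltaCut W₁ W₂ < deltaCut W₁ W₂ + ε / (m * m + 1 : ℝ) by linarith)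
  have k1 := h1.comp hσ₁.1.measurable
  have k2 := h2.comp hσ₂.1.measurable
  have := counting F _ _ k1 k2 _ (le_cutNorm (k1.abs_sub_le k2))
  rw [inducedDensity_comp F h1 hσ₁, inducedDensity_comp F h2 hσ₂] at this
  refine this.trans ?_
  have hmm : (0:ℝ) ≤ m * m := by positivity
  have e : (m * m : ℝ) * (ε / (m * m + 1 : ℝ)) ≤ ε := by
    rw [mul_div_assoc', div_le_iff₀ (by positivity)]; nlinarith
  calc _ ≤ (m * m : ℝ) * (deltaCut W₁ W₂ + ε / (m * m + 1 : ℝ)) :=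
        mul_le_mul_of_nonneg_left hr.le hmm
    _ ≤ _ := by rw [mul_add]; linarith

lemma inducedDensity_nonneg {m : ℕ} (F : SimpleGraph (Fin m)) {W : ℝ → ℝ → ℝ} (hW : IsKer W) :
    0 ≤ inducedDensity F W := by
  rw [inducedDensity_eq]
  exact integral_nonneg fun x => (prod_fac_mem F (fun _ => W) (fun _ => hW) _ x).1

lemma forward {Q : GraphClass} (hQ : IsHereditary Q) {W : ℝ → ℝ → ℝ} (hW : W ∈ limitSet Q)
    (m : ℕ) (F : SimpleGraph (Fin m)) (hF : F ∉ Q m) : inducedDensity F W = 0 := by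
  obtain ⟨hWg, nk, Gk, hGk, hnk, hlim⟩ := hW
  have hK : IsKer W := ⟨hWg.2.1, hWg.2.2⟩
  refine le_antisymm ?_ (inducedDensity_nonneg F hK)
  have hlim2 : Tendsto (fun k => (m * m : ℝ) * (2 / (nk k : ℝ)) +
      (m * m : ℝ) * deltaCut (graphonOfGraph (Gk k)) W) atTop (nhds 0) := by
    have h1 : Tendsto (fun k => (2:ℝ) / (nk k : ℝ)) atTop (nhds 0) :=
      tendsto_const_nhds.div_atTop (tendsto_natCast_atTop_atTop.comp hnk)
    simpa using (h1.const_mul (m * m : ℝ)).add (hlim.const_mul (m * m : ℝ))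
  refine ge_of_tendsto hlim2 ?_
  filter_upwards [hnk.eventually_ge_atTop 1] with k hk
  have a := density_graph_le hQ hk F hF (Gk k) (hGk k)
  have b := counting_delta F _ W (isKer_graphonOfGraph (Gk k)) hK
  rw [abs_le] at b
  linarith [b.1]

/-! ### Backward direction -/

lemma volume_cell {n : ℕ} (hn : 1 ≤ n) (i : Fin n) : volume (cell n i) = ENNReal.ofReal (1 / n) := by
  have : cell n i = Set.Ioc (((i:ℕ):ℝ) / n) ((((i:ℕ):ℝ) + 1) / n) := by
    ext x; rw [mem_cell_iff hn]; rfl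
  rw [this, Real.volume_Ioc, add_div, add_sub_cancel_left]

lemma cell_subset {n : ℕ} (i : Fin n) : cell n i ⊆ Set.Icc 0 1 := by
  have hn : 1 ≤ n := by have := i.2; omega
  have hn' : (0:ℝ) < n := by exact_mod_cast hn
  intro x hx
  rw [mem_cell_iff hn] at hx
  refine ⟨le_trans (by positivity) hx.1.le, hx.2.trans ?_⟩
  rw [div_le_one hn']
  exact_mod_cast i.2

lemma cell_disjoint {n : ℕ} {i j : Fin n} (hij : i ≠ j) : Disjoint (cell n i) (cell n j) := by
  rw [Set.disjoint_left]
  intro x hx hy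
  have hx' : ⌈(n:ℝ) * x⌉ = ((i:ℕ):ℤ) + 1 := hx
  have hy' : ⌈(n:ℝ) * x⌉ = ((j:ℕ):ℤ) + 1 := hy
  exact hij (by ext; omega)

/-- Uniform measure on a cell. -/
def cellMeas (n : ℕ) (i : Fin n) : Measure ℝ := (n : ENNReal) • volume.restrict (cell n i)

instance cellMeas_prob (n : ℕ) (i : Fin n) : IsProbabilityMeasure (cellMeas n i) := by
  have hn : 1 ≤ n := by have := i.2; omega
  have hn' : (0:ℝ) < n := by exact_mod_cast hn
  constructor
  rw [cellMeas, Measure.smul_apply, Measure.restrict_apply_univ, volume_cell hn, smul_eq_mul,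
    ← ENNReal.ofReal_natCast, ← ENNReal.ofReal_mul hn'.le, mul_one_div_cancel hn'.ne',
    ENNReal.ofReal_one]

lemma pi_cellMeas (n : ℕ) : Measure.pi (cellMeas n) =
    ((n : ENNReal) ^ n) • (volume : Measure (Fin n → ℝ)).restrict (Set.univ.pi (cell n)) := by
  refine Measure.pi_eq fun s hs => ?_
  rw [volume_pi, Measure.restrict_pi_pi, Measure.smul_apply, Measure.pi_pi]
  simp [cellMeas, Finset.prod_mul_distrib]

lemma pi_cellMeas_ac (n : ℕ) : Measure.pi (cellMeas n) ≪ Measure.pi (fun _ : Fin n => muI) := by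
  rw [pi_cellMeas]
  have : Measure.pi (fun _ : Fin n => muI) =
      (volume : Measure (Fin n → ℝ)).restrict (Set.univ.pi fun _ => Set.Icc (0:ℝ) 1) := by
    rw [volume_pi, Measure.restrict_pi_pi]
  rw [this]
  refine Measure.AbsolutelyContinuous.trans Measure.smul_absolutelyContinuous ?_
  exact Measure.absolutelyContinuous_of_le
    (Measure.restrict_mono (Set.pi_mono fun i _ => cell_subset i) le_rfl)

lemma map_pair_cell {n : ℕ} {i j : Fin n} (hij : i ≠ j) :
    Measure.map (fun x : Fin n → ℝ => (x i, x j)) (Measure.pi (cellMeas n)) =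
      (((n : ENNReal) * n) • volume.restrict (cell n i ×ˢ cell n j)) := by
  have hind := (ProbabilityTheory.iIndepFun_pi (μ := cellMeas n) (X := fun _ x => x)
    (fun i => aemeasurable_id)).indepFun hij
  rw [ProbabilityTheory.indepFun_iff_map_prod_eq_prod_map_map
    (measurable_pi_apply i).aemeasurable (measurable_pi_apply j).aemeasurable] at hind
  have e : ∀ i, Measure.map (fun x : Fin n → ℝ => x i) (Measure.pi (cellMeas n)) = cellMeas n i :=
    fun i => (measurePreserving_eval (cellMeas n) i).map_eq
  rw [hind, e, e, cellMeas, cellMeas, Measure.prod_smul_left, Measure.prod_smul_right, smul_smul,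
    Measure.prod_restrict]
  rfl

/-- Splitting an integral over a product according to the cells. -/
lemma setIntegral_cells {n : ℕ} (hn : 1 ≤ n) {S T : Set ℝ} (hS : MeasurableSet S)
    (hT : MeasurableSet T) (h1 : S ⊆ Set.Icc 0 1) (h2 : T ⊆ Set.Icc 0 1) (f : ℝ × ℝ → ℝ)
    (hf : IntegrableOn f (Set.Icc 0 1 ×ˢ Set.Icc 0 1)) :
    ∫ p in S ×ˢ T, f p = ∑ i, ∑ j, ∫ p in (S ∩ cell n i) ×ˢ (T ∩ cell n j), f p := by
  have hU : ∀ S : Set ℝ, S ⊆ Set.Icc 0 1 → (S : Set ℝ) =ᵐ[volume] ⋃ i, S ∩ cell n i := by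
    intro S hS
    have h2 : ∀ᵐ y : ℝ, y ≠ 0 := Measure.ae_ne volume 0
    filter_upwards [h2] with x hx
    refine propext ⟨fun h => ?_, fun h => ?_⟩
    · obtain ⟨i, hi⟩ := exists_cell hn (lt_of_le_of_ne (hS h).1 hx.symm) (hS h).2
      exact Set.mem_iUnion.2 ⟨i, h, hi⟩
    · obtain ⟨i, hi⟩ := Set.mem_iUnion.1 h
      exact hi.1
  have e1 : (S ×ˢ T : Set (ℝ × ℝ)) =ᵐ[volume] (⋃ i, S ∩ cell n i) ×ˢ (⋃ j, T ∩ cell n j) := by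
    rw [Measure.volume_eq_prod]
    exact Measure.set_prod_ae_eq (hU S h1) (hU T h2)
  have e2 : (⋃ i, S ∩ cell n i) ×ˢ (⋃ j, T ∩ cell n j) =
      ⋃ e : Fin n × Fin n, (S ∩ cell n e.1) ×ˢ (T ∩ cell n e.2) := by
    ext p
    simp only [Set.mem_prod, Set.mem_iUnion, Prod.exists]
    exact ⟨fun ⟨⟨i, a⟩, ⟨j, b⟩⟩ => ⟨i, j, a, b⟩, fun ⟨i, j, a, b⟩ => ⟨⟨i, a⟩, ⟨j, b⟩⟩⟩
  rw [setIntegral_congr_set e1, e2, integral_iUnion_fintype, Fintype.sum_prod_type]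
  · exact fun e => (hS.inter (measurableSet_cell n _)).prod (hT.inter (measurableSet_cell n _))
  · intro e e' hne
    simp only [Function.onFun]
    rw [Set.disjoint_prod]
    by_cases h : e.1 = e'.1
    · right
      have : e.2 ≠ e'.2 := fun h' => hne (Prod.ext h h')
      exact (cell_disjoint this).mono Set.inter_subset_right Set.inter_subset_right
    · left
      exact (cell_disjoint h).mono Set.inter_subset_right Set.inter_subset_right
  · exact fun e => hf.mono_set (Set.prod_mono (Set.inter_subset_left.trans h1)
      (Set.inter_subset_left.trans h2))

lemma exists_sample {Q : GraphClass} {W : ℝ → ℝ → ℝ} (hW : IsKer W) {n : ℕ} (hn : 1 ≤ n)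
    (hQ : ∀ F : SimpleGraph (Fin n), F ∉ Q n → inducedDensity F W = 0)
    (Δ : ℝ × ℝ → ℝ) (hΔm : Measurable Δ) (hΔ0 : ∀ p, 0 ≤ Δ p)
    (hΔ : IntegrableOn Δ (Set.Icc 0 1 ×ˢ Set.Icc 0 1)) :
    ∃ x : Fin n → ℝ, (∀ i, x i ∈ cell n i) ∧ (∀ F, F ∉ Q n → ∏ e, fac F W e x = 0) ∧
      ∑ i, ∑ j, (if i = j then 0 else Δ (x i, x j)) ≤
        (n * n : ℝ) * ∫ p in Set.Icc 0 1 ×ˢ Set.Icc 0 1, Δ p := by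
  have hgood : ∀ᵐ x ∂(Measure.pi (cellMeas n)),
      (∀ i, x i ∈ cell n i) ∧ (∀ F, F ∉ Q n → ∏ e, fac F W e x = 0) := by
    refine Filter.Eventually.and ?_ ?_
    · rw [pi_cellMeas]
      refine Measure.smul_absolutelyContinuous.ae_le ?_
      filter_upwards [ae_restrict_mem (MeasurableSet.univ_pi fun i => measurableSet_cell n i)] with x hx
      exact fun i => hx i (Set.mem_univ _)
    · refine (pi_cellMeas_ac n).ae_le ?_
      have : ∀ F : SimpleGraph (Fin n), ∀ᵐ x ∂(Measure.pi fun _ : Fin n => muI),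
          F ∉ Q n → ∏ e, fac F W e x = 0 := by
        intro F
        by_cases hF : F ∈ Q n
        · exact Eventually.of_forall fun x h => absurd hF h
        · have h0 := hQ F hF
          rw [inducedDensity_eq, integral_eq_zero_iff_of_nonneg] at h0
          · filter_upwards [h0] with x hx _
            exact hx
          · exact fun x => (prod_fac_mem F (fun _ => W) (fun _ => hW) _ x).1
          · refine integrable_of_bdd (prod_fac_meas F (fun _ => W) (fun _ => hW) _) 1 fun x => ?_
            have := prod_fac_mem F (fun _ => W) (fun _ => hW) Finset.univ x
            rw [abs_of_nonneg this.1]; exact this.2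
      exact ae_all_iff.2 this
  have hsub : ∀ i j : Fin n, cell n i ×ˢ cell n j ⊆ Set.Icc (0:ℝ) 1 ×ˢ Set.Icc (0:ℝ) 1 :=
    fun i j => Set.prod_mono (cell_subset i) (cell_subset j)
  have hint1 : ∀ i j : Fin n, i ≠ j →
      Integrable (fun x : Fin n → ℝ => Δ (x i, x j)) (Measure.pi (cellMeas n)) := by
    intro i j h
    have hm : Measurable (fun x : Fin n → ℝ => (x i, x j)) := by fun_prop
    have : Integrable Δ (Measure.map (fun x : Fin n → ℝ => (x i, x j)) (Measure.pi (cellMeas n))) := by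
      rw [map_pair_cell h]
      exact (hΔ.mono_set (hsub i j)).integrable.smul_measure
        (ENNReal.mul_ne_top (ENNReal.natCast_ne_top n) (ENNReal.natCast_ne_top n))
    exact this.comp_measurable hm
  have hval : ∀ i j : Fin n, i ≠ j → ∫ x, Δ (x i, x j) ∂(Measure.pi (cellMeas n)) =
      (n * n : ℝ) * ∫ p in cell n i ×ˢ cell n j, Δ p := by
    intro i j h
    have hm : Measurable (fun x : Fin n → ℝ => (x i, x j)) := by fun_prop
    rw [← integral_map (φ := fun x : Fin n → ℝ => (x i, x j)) hm.aemeasurable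
      hΔm.aestronglyMeasurable, map_pair_cell h, integral_smul_measure]
    simp
  have hintg : ∀ i j : Fin n, Integrable (fun x : Fin n → ℝ => if i = j then 0 else Δ (x i, x j))
      (Measure.pi (cellMeas n)) := by
    intro i j
    by_cases h : i = j
    · simp only [if_pos h]; exact integrable_zero _ _ _
    · simp only [if_neg h]; exact hint1 i j h
  obtain ⟨x, hx, hle⟩ := exists_notMem_null_le_integral (μ := Measure.pi (cellMeas n))
    (f := fun x => ∑ i, ∑ j, (if i = j then 0 else Δ (x i, x j)))
    (integrable_finsetSum _ fun i _ => integrable_finsetSum _ fun j _ => hintg i j)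
    (ae_iff.1 hgood)
  have hx' := not_not.1 hx
  refine ⟨x, hx'.1, hx'.2, hle.trans ?_⟩
  rw [integral_finsetSum _ fun i _ => integrable_finsetSum _ fun j _ => hintg i j]
  have hcells := setIntegral_cells hn measurableSet_Icc measurableSet_Icc (le_refl (Set.Icc (0:ℝ) 1))
    (le_refl (Set.Icc (0:ℝ) 1)) Δ hΔ
  rw [hcells, Finset.mul_sum]
  refine Finset.sum_le_sum fun i _ => ?_
  rw [integral_finsetSum _ fun j _ => hintg i j, Finset.mul_sum]
  refine Finset.sum_le_sum fun j _ => ?_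
  rw [Set.inter_eq_right.2 (cell_subset i), Set.inter_eq_right.2 (cell_subset j)]
  by_cases h : i = j
  · simp only [if_pos h, integral_zero]
    have : 0 ≤ ∫ p in cell n i ×ˢ cell n j, Δ p := integral_nonneg hΔ0
    positivity
  · simp only [if_neg h]
    exact (hval i j h).le

instance finite_square : IsFiniteMeasure ((volume : Measure (ℝ × ℝ)).restrict
      (Set.Icc (0:ℝ) 1 ×ˢ Set.Icc (0:ℝ) 1)) :=
  ⟨by rw [Measure.restrict_apply_univ]; exact (isCompact_Icc.prod isCompact_Icc).measure_lt_top⟩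

lemma exists_close_graph {Q : GraphClass} {W : ℝ → ℝ → ℝ} (hWg : IsGraphon W) {n : ℕ} (hn : 1 ≤ n)
    (hQ : ∀ F : SimpleGraph (Fin n), F ∉ Q n → inducedDensity F W = 0)
    (U : ℝ × ℝ → ℝ) (hUm : Measurable U) (hUi : IntegrableOn U (Set.Icc 0 1 ×ˢ Set.Icc 0 1))
    (ε : ℝ) (hε : 0 < ε)
    (hUW : ∫ p in Set.Icc 0 1 ×ˢ Set.Icc 0 1, |W p.1 p.2 - U p| ≤ ε)
    (hUc : ∀ p q : ℝ × ℝ, dist p q ≤ 1 / n → |U p - U q| ≤ ε)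
    (hn1 : 1 / (n:ℝ) ≤ ε) (hn2 : 2 / (n:ℝ) ≤ ε ^ 4) :
    ∃ G ∈ Q n, cutNorm (fun x y => graphonOfGraph G x y - W x y) ≤ 5 * ε := by
  classical
  have hW : IsKer W := ⟨hWg.2.1, hWg.2.2⟩
  have hn' : (0:ℝ) < n := by exact_mod_cast hn
  have hWi : IntegrableOn (fun p : ℝ × ℝ => W p.1 p.2) (Set.Icc 0 1 ×ˢ Set.Icc 0 1) := by
    refine integrable_of_bdd hW.1 1 fun p => ?_
    have := hW.2 p.1 p.2
    rw [abs_of_nonneg this.1]; exact this.2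
  set Δ : ℝ × ℝ → ℝ := fun p => |W p.1 p.2 - U p| with hΔd
  have hΔm : Measurable Δ := (Measurable.sub (show Measurable (fun p : ℝ × ℝ => W p.1 p.2) from hW.1)
    hUm).abs
  have hΔi : IntegrableOn Δ (Set.Icc 0 1 ×ˢ Set.Icc 0 1) := (hWi.sub hUi).abs
  have hΔ0 : ∀ p, 0 ≤ Δ p := fun p => abs_nonneg _
  obtain ⟨x, hx, hgood, hsum⟩ := exists_sample hW hn hQ Δ hΔm hΔ0 hΔi
  set h : Sym2 (Fin n) → ℝ := Sym2.lift ⟨fun i j => W (x i) (x j), fun i j => hWg.1 _ _⟩ with hh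
  have hval : ∀ i j, h s(i, j) = W (x i) (x j) := fun i j => rfl
  have hh01 : ∀ e, h e ∈ Set.Icc (0:ℝ) 1 := by
    intro e
    induction e using Sym2.ind with
    | _ i j => exact hW.2 _ _
  obtain ⟨g, g1, g2, g3, g4⟩ := exists_rounding h hh01
  let G : SimpleGraph (Fin n) :=
    { Adj := fun i j => i ≠ j ∧ g s(i, j) = 1
      symm := ⟨fun i j hij => ⟨hij.1.symm, by rw [Sym2.eq_swap]; exact hij.2⟩⟩
      loopless := ⟨fun i hi => hi.1 rfl⟩ }
  have hGadj : ∀ i j, G.Adj i j ↔ i ≠ j ∧ g s(i, j) = 1 := fun i j => Iff.rfl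
  have hGQ : G ∈ Q n := by
    by_contra hG
    obtain ⟨⟨i, j⟩, -, he⟩ := Finset.prod_eq_zero_iff.1 (hgood G hG)
    simp only [fac] at he
    by_cases hij : i < j
    · rw [if_pos hij] at he
      by_cases ha : G.Adj i j
      · rw [if_pos ha] at he
        have := g2 s(i, j) he
        rw [((hGadj i j).1 ha).2] at this
        exact one_ne_zero this
      · rw [if_neg ha] at he
        have := g3 s(i, j) (by rw [hval]; linarith)
        exact ha ((hGadj i j).2 ⟨hij.ne, this⟩)
    · rw [if_neg hij] at he; exact one_ne_zero he
  refine ⟨G, hGQ, ?_⟩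
  set D := diffMat h g with hD
  have hKG := isKer_graphonOfGraph G
  have hd : ∀ i j, ∀ s ∈ cell n i, ∀ t ∈ cell n j,
      |graphonOfGraph G s t - W s t - D i j| ≤
        ((if i = j then 1 else 0) + (if i = j then 0 else Δ (x i, x j)) + ε) + Δ (s, t) := by
    intro i j s hs t ht
    by_cases hij : i = j
    · rw [graphonOfGraph_cell G hs ht]
      have : ¬ G.Adj i j := fun h => ((hGadj i j).1 h).1 hij
      rw [if_neg this, hD, diffMat, if_pos hij, if_pos hij, if_pos hij]
      have hw := hW.2 s t
      have := hΔ0 (s, t)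
      rw [zero_sub, sub_zero, abs_neg, abs_of_nonneg hw.1]
      linarith [hw.2]
    · have hg : graphonOfGraph G s t = g s(i, j) := by
        rw [graphonOfGraph_cell G hs ht]
        split_ifs with hadj
        · exact ((hGadj i j).1 hadj).2.symm
        · rcases g1 s(i, j) with h | h
          · exact h.symm
          · exact absurd ((hGadj i j).2 ⟨hij, h⟩) hadj
      rw [hg, hD, diffMat, if_neg hij, if_neg hij, if_neg hij, hval]
      have hdist : dist (x i, x j) (s, t) ≤ 1 / n := by
        rw [Prod.dist_eq, max_le_iff, Real.dist_eq, Real.dist_eq]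
        exact ⟨abs_sub_le_of_cell hn (hx i) hs, abs_sub_le_of_cell hn (hx j) ht⟩
      have hu := hUc _ _ hdist
      simp only [hΔd]
      have e : g s(i, j) - W s t - (g s(i, j) - W (x i) (x j)) =
        (W (x i) (x j) - U (x i, x j)) + (U (x i, x j) - U (s, t)) - (W s t - U (s, t)) := by ring
      rw [e, zero_add]
      refine (abs_sub _ _).trans ?_
      refine add_le_add ((abs_add_le _ _).trans (add_le_add le_rfl hu)) le_rfl
  refine csSup_le ⟨_, ∅, ∅, MeasurableSet.empty, MeasurableSet.empty, Set.empty_subset _,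
    Set.empty_subset _, rfl⟩ ?_
  rintro r ⟨S, T, hS, hT, hS1, hT1, rfl⟩
  have hWGi : IntegrableOn (fun p : ℝ × ℝ => graphonOfGraph G p.1 p.2 - W p.1 p.2)
      (Set.Icc 0 1 ×ˢ Set.Icc 0 1) := by
    refine Integrable.sub ?_ hWi
    refine integrable_of_bdd hKG.1 1 fun p => ?_
    have := hKG.2 p.1 p.2
    rw [abs_of_nonneg this.1]; exact this.2
  rw [setIntegral_cells hn hS hT hS1 hT1 _ hWGi]
  set a : Fin n → ℝ := fun i => volume.real (S ∩ cell n i) with ha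
  set b : Fin n → ℝ := fun i => volume.real (T ∩ cell n i) with hb
  have hvol : ∀ (S : Set ℝ) i, volume.real (S ∩ cell n i) ≤ 1 / n := by
    intro S i
    refine ENNReal.toReal_le_of_le_ofReal (by positivity) ?_
    rw [← volume_cell hn i]
    exact measure_mono Set.inter_subset_right
  have hprodvol : ∀ i j, volume.real ((S ∩ cell n i) ×ˢ (T ∩ cell n j)) = a i * b j := by
    intro i j
    rw [Measure.volume_eq_prod, measureReal_prod_prod]
  have hsubset : ∀ i j, (S ∩ cell n i) ×ˢ (T ∩ cell n j) ⊆ Set.Icc (0:ℝ) 1 ×ˢ Set.Icc (0:ℝ) 1 :=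
    fun i j => Set.prod_mono (Set.inter_subset_left.trans hS1) (Set.inter_subset_left.trans hT1)
  have hfin : ∀ i j, volume ((S ∩ cell n i) ×ˢ (T ∩ cell n j)) ≠ ⊤ := fun i j =>
    ((measure_mono (hsubset i j)).trans_lt
      (isCompact_Icc.prod isCompact_Icc).measure_lt_top).ne
  have hms : ∀ i j, MeasurableSet ((S ∩ cell n i) ×ˢ (T ∩ cell n j)) := fun i j =>
    (hS.inter (measurableSet_cell n i)).prod (hT.inter (measurableSet_cell n j))
  have hcell : ∀ i j, |(∫ p in (S ∩ cell n i) ×ˢ (T ∩ cell n j),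
        (graphonOfGraph G p.1 p.2 - W p.1 p.2)) - a i * b j * D i j| ≤
      ((if i = j then 1 else 0) + (if i = j then 0 else Δ (x i, x j)) + ε) * (1 / n * (1 / n)) +
        ∫ p in cell n i ×ˢ cell n j, Δ p := by
    intro i j
    have hcst : ∀ c : ℝ, IntegrableOn (fun _ : ℝ × ℝ => c) ((S ∩ cell n i) ×ˢ (T ∩ cell n j)) :=
      fun c => integrableOn_const (hfin i j)
    set c := ((if i = j then (1:ℝ) else 0) + (if i = j then 0 else Δ (x i, x j)) + ε) with hc
    have hc0 : 0 ≤ c := by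
      rw [hc]; split_ifs <;> linarith [hΔ0 (x i, x j)]
    have hWGi' := hWGi.mono_set (hsubset i j)
    have hΔi' := hΔi.mono_set (hsubset i j)
    have e : (∫ p in (S ∩ cell n i) ×ˢ (T ∩ cell n j),
        (graphonOfGraph G p.1 p.2 - W p.1 p.2)) - a i * b j * D i j =
        ∫ p in (S ∩ cell n i) ×ˢ (T ∩ cell n j),
        (graphonOfGraph G p.1 p.2 - W p.1 p.2 - D i j) := by
      rw [integral_sub hWGi' (hcst _), setIntegral_const, hprodvol, smul_eq_mul]
    rw [e]
    calc |∫ p in (S ∩ cell n i) ×ˢ (T ∩ cell n j), (graphonOfGraph G p.1 p.2 - W p.1 p.2 - D i j)|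
        ≤ ∫ p in (S ∩ cell n i) ×ˢ (T ∩ cell n j),
            |graphonOfGraph G p.1 p.2 - W p.1 p.2 - D i j| := abs_integral_le_integral_abs
      _ ≤ ∫ p in (S ∩ cell n i) ×ˢ (T ∩ cell n j), (c + Δ p) := by
          refine setIntegral_mono_on (hWGi'.sub (hcst _)).abs ((hcst c).add hΔi') (hms i j) ?_
          rintro ⟨s, t⟩ ⟨hs, ht⟩
          exact hd i j s hs.2 t ht.2
      _ = a i * b j * c + ∫ p in (S ∩ cell n i) ×ˢ (T ∩ cell n j), Δ p := by
          rw [integral_add (hcst c) hΔi', setIntegral_const, hprodvol, smul_eq_mul]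
      _ ≤ _ := by
          refine add_le_add ?_ ?_
          · rw [mul_comm]
            refine mul_le_mul_of_nonneg_left ?_ hc0
            exact mul_le_mul (hvol S i) (hvol T j) measureReal_nonneg (by positivity)
          · refine setIntegral_mono_set
              (hΔi.mono_set (Set.prod_mono (cell_subset i) (cell_subset j)))
              (Eventually.of_forall hΔ0) ?_
            exact (Set.prod_mono Set.inter_subset_right Set.inter_subset_right :
              (S ∩ cell n i) ×ˢ (T ∩ cell n j) ⊆ cell n i ×ˢ cell n j).eventuallyLE
  have hΔsum : ∑ i, ∑ j, ∫ p in cell n i ×ˢ cell n j, Δ p ≤ ε := by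
    have hc := setIntegral_cells hn measurableSet_Icc measurableSet_Icc
      (le_refl (Set.Icc (0:ℝ) 1)) (le_refl (Set.Icc (0:ℝ) 1)) Δ hΔi
    refine le_trans (le_of_eq ?_) hUW
    rw [hc]
    refine Finset.sum_congr rfl fun i _ => Finset.sum_congr rfl fun j _ => ?_
    rw [Set.inter_eq_right.2 (cell_subset i), Set.inter_eq_right.2 (cell_subset j)]
  have hX : |∑ i, ∑ j, a i * b j * D i j| ≤ ε := by
    have hq := cs_quad D a b ((1 / (n:ℝ)) ^ 2)
      (fun i => pow_le_pow_left₀ measureReal_nonneg (hvol S i) 2)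
      (fun i => pow_le_pow_left₀ measureReal_nonneg (hvol T i) 2) (by positivity)
    have hq2 : (∑ i, ∑ j, a i * b j * D i j) ^ 4 ≤ ε ^ 4 := by
      refine hq.trans ?_
      have : (∑ i, ∑ i', ∑ j, ∑ j', D i j * D i j' * (D i' j * D i' j')) ≤ 2 * (n:ℝ) ^ 3 := g4
      refine (mul_le_mul_of_nonneg_left this (by positivity)).trans ?_
      refine le_trans (le_of_eq ?_) hn2
      field_simp
    have h4 : |∑ i, ∑ j, a i * b j * D i j| ^ 4 ≤ ε ^ 4 := by
      rwa [Even.pow_abs (by decide)]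
    exact le_of_pow_le_pow_left₀ (by norm_num) hε.le h4
  have hcsum : ∑ i : Fin n, ∑ j : Fin n,
      ((if i = j then 1 else 0) + (if i = j then 0 else Δ (x i, x j)) + ε) * (1 / n * (1 / n))
      ≤ 3 * ε := by
    simp only [← Finset.sum_mul, Finset.sum_add_distrib]
    have h1 : ∑ i : Fin n, ∑ j : Fin n, (if i = j then (1:ℝ) else 0) = n := by simp
    have h2 : ∑ i : Fin n, ∑ j : Fin n, (if i = j then 0 else Δ (x i, x j)) ≤ (n * n : ℝ) * ε :=
      hsum.trans (mul_le_mul_of_nonneg_left hUW (by positivity))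
    have h3 : ∑ i : Fin n, ∑ j : Fin n, ε = n * n * ε := by simp [mul_assoc]
    rw [h1, h3]
    calc _ ≤ ((n:ℝ) + n * n * ε + n * n * ε) * (1 / n * (1 / n)) := by gcongr
      _ = 1 / n + 2 * ε := by field_simp; ring
      _ ≤ 3 * ε := by linarith
  have hsplit : ∑ i, ∑ j, ∫ p in (S ∩ cell n i) ×ˢ (T ∩ cell n j),
        (graphonOfGraph G p.1 p.2 - W p.1 p.2) =
      ∑ i, ∑ j, a i * b j * D i j + ∑ i, ∑ j, ((∫ p in (S ∩ cell n i) ×ˢ (T ∩ cell n j),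
        (graphonOfGraph G p.1 p.2 - W p.1 p.2)) - a i * b j * D i j) := by
    simp only [← Finset.sum_add_distrib, add_sub_cancel]
  rw [hsplit]
  refine (abs_add_le _ _).trans ?_
  have hY : |∑ i, ∑ j, ((∫ p in (S ∩ cell n i) ×ˢ (T ∩ cell n j),
        (graphonOfGraph G p.1 p.2 - W p.1 p.2)) - a i * b j * D i j)| ≤ 4 * ε := by
    refine (Finset.abs_sum_le_sum_abs _ _).trans ?_
    refine (Finset.sum_le_sum fun i _ => (Finset.abs_sum_le_sum_abs _ _).trans
      (Finset.sum_le_sum fun j _ => hcell i j)).trans ?_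
    simp only [Finset.sum_add_distrib (f := fun j => (_ : ℝ) * (1 / n * (1 / n)))] at *
    simp only [Finset.sum_add_distrib] at *
    linarith
  linarith

lemma backward {Q : GraphClass} {W : ℝ → ℝ → ℝ} (hW : IsGraphon W)
    (h : ∀ m : ℕ, 1 ≤ m → ∀ F : SimpleGraph (Fin m), F ∉ Q m → inducedDensity F W = 0) :
    W ∈ limitSet Q := by
  have key : ∀ k : ℕ, ∃ n : ℕ, k ≤ n ∧ ∃ G ∈ Q n,
      cutNorm (fun x y => graphonOfGraph G x y - W x y) ≤ 5 * (1 / ((k:ℝ) + 1)) := by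
    intro k
    have hε : (0:ℝ) < 1 / ((k:ℝ) + 1) := by positivity
    set ε := 1 / ((k:ℝ) + 1) with hεd
    have hWi : Integrable (fun p : ℝ × ℝ => W p.1 p.2)
        (volume.restrict (Set.Icc (0:ℝ) 1 ×ˢ Set.Icc (0:ℝ) 1)) := by
      refine integrable_of_bdd hW.2.1 1 fun p => ?_
      have := hW.2.2 p.1 p.2
      rw [abs_of_nonneg this.1]; exact this.2
    obtain ⟨U, hUs, hUd, hUc, hUi⟩ := hWi.exists_hasCompactSupport_integral_sub_le hε
    obtain ⟨δ, hδ, hUδ⟩ := Metric.uniformContinuous_iff.1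
      (hUs.uniformContinuous_of_continuous hUc) ε hε
    have t1 := tendsto_const_div_atTop_nhds_zero_nat (1:ℝ)
    have t2 := tendsto_const_div_atTop_nhds_zero_nat (2:ℝ)
    obtain ⟨n, ⟨⟨⟨hn1, hn2⟩, hn3⟩, hn4⟩, hn5⟩ :=
      ((((t1.eventually_lt_const hδ).and (t1.eventually_lt_const hε)).and
        (t2.eventually_lt_const (pow_pos hε 4))).and
        ((eventually_ge_atTop 1).and (eventually_ge_atTop k))|>.and (eventually_ge_atTop k)).exists
    obtain ⟨G, hG, hle⟩ := exists_close_graph hW hn4.1 (h n hn4.1) U hUc.measurable hUi ε hε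
      hUd (fun p q hpq => by
        have := hUδ (hpq.trans_lt hn1)
        rw [Real.dist_eq] at this
        exact this.le) hn2.le hn3.le
    exact ⟨n, hn5, G, hG, hle⟩
  choose nk hnk Gk hGk hle using key
  refine ⟨hW, nk, Gk, hGk, tendsto_atTop_mono hnk tendsto_id, ?_⟩
  have hlim : Tendsto (fun k : ℕ => 5 * (1 / ((k:ℝ) + 1))) atTop (nhds 0) := by
    simpa using tendsto_one_div_add_atTop_nhds_zero_nat.const_mul (5:ℝ)
  refine squeeze_zero (fun k => deltaCut_nonneg _ _) (fun k => ?_) hlim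
  refine le_trans (csInf_le ⟨0, ?_⟩ ⟨id, id, isMPSelf_id, isMPSelf_id, rfl⟩) (hle k)
  rintro r ⟨_, _, _, _, rfl⟩
  exact cutNorm_nonneg _

/-- Lemma 3.2: for a hereditary class `Q` and a graphon `W`,
`W ∈ Q̂` iff `p(F; W) = 0` for every graph `F` not in `Q`. -/
theorem stmt0 (Q : GraphClass) (hQ : IsHereditary Q)
    (W : ℝ → ℝ → ℝ) (hW : IsGraphon W) :
    W ∈ limitSet Q ↔
      ∀ m : ℕ, 1 ≤ m → ∀ F : SimpleGraph (Fin m), F ∉ Q m → inducedDensity F W = 0 :=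
  ⟨fun h m _ F hF => forward hQ h m F hF, fun h => backward hW h⟩

end
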